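/- arXiv:2207.12017 — 5 statements merged into one kernel-verified Lean document; each statement's English description precedes it below -/
import Mathlib

section
/- Let 𝓜 = (M_k) be a regular sequence, m_k = M_k/k!, and let c > 1 be a constant with c > (m_{k+1}/m_k)^{1/k} for every k ≥ 1. Then for every j ∈ ℕ and every r > 0 one has h₁(r)/r^j ≤ c^{j(j+1)/2} · h₁(c^j r). -/
open scoped BigOperators

/-- `m_k = M_k / k!` -/
noncomputable def DCm (M : ℕ → ℝ) (k : ℕ) : ℝ := M k / (Nat.factorial k)

/-- A sequence `M` of non-negative reals is regular if, with `m_k = M_k/k!`: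
(a) `m_0 = m_1 = 1`; (b) `m_k² ≤ m_{k-1} m_{k+1}` for `k ≥ 1`;
(c) `sup_{k≥1} (m_{k+1}/m_k)^{1/k} < ∞`; (d) `m_k^{1/k} → ∞`. -/
def DCRegular (M : ℕ → ℝ) : Prop :=
  (∀ k, 0 ≤ M k) ∧
  DCm M 0 = 1 ∧ DCm M 1 = 1 ∧
  (∀ k : ℕ, 1 ≤ k → (DCm M k) ^ 2 ≤ DCm M (k - 1) * DCm M (k + 1)) ∧
  (∃ B : ℝ, ∀ k : ℕ, 1 ≤ k → (DCm M (k + 1) / DCm M k) ^ ((1 : ℝ) / k) ≤ B) ∧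
  Filter.Tendsto (fun k : ℕ => (DCm M k) ^ ((1 : ℝ) / k)) Filter.atTop Filter.atTop

/-- `h(r) = inf { m_k r^k : k ∈ ℕ }`. -/
noncomputable def DCh (M : ℕ → ℝ) (r : ℝ) : ℝ :=
  sInf {x : ℝ | ∃ k : ℕ, x = DCm M k * r ^ k}

/-- `h₁(r) = inf { m_k r^{k-1} : k ≥ 1 }`. -/
noncomputable def DCh1 (M : ℕ → ℝ) (r : ℝ) : ℝ :=
  sInf {x : ℝ | ∃ k : ℕ, 1 ≤ k ∧ x = DCm M k * r ^ (k - 1)}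

/-- For a regular sequence and a constant `c > 1` with `c > (m_{k+1}/m_k)^{1/k}` for all
`k ≥ 1`: for every `j ∈ ℕ` and every `r > 0`, `h₁(r)/r^j ≤ c^{j(j+1)/2} h₁(c^j r)`. -/
theorem stmt4 (M : ℕ → ℝ) (hreg : DCRegular M) (c : ℝ) (hc1 : 1 < c)
    (hc : ∀ k : ℕ, 1 ≤ k → (DCm M (k + 1) / DCm M k) ^ ((1 : ℝ) / k) < c) :
    ∀ (j : ℕ) (r : ℝ), 0 < r →
      DCh1 M r / r ^ j ≤ c ^ ((j * (j + 1)) / 2) * DCh1 M (c ^ j * r) := by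
  obtain ⟨hM, h0, h1, hlc, -, -⟩ := hreg
  have hcp : 0 < c := by linarith
  have hnn : ∀ k, 0 ≤ DCm M k := fun k => div_nonneg (hM k) (by positivity)
  have hpos : ∀ n, 0 < DCm M (n + 1) := by
    intro n
    induction n with
    | zero => simp [h1]
    | succ n ih =>
      have h := hlc (n + 1) (by omega)
      refine lt_of_le_of_ne (hnn _) fun h' => ?_
      rw [← h', mul_zero] at h
      have := pow_pos ih 2
      linarith
  have hstep : ∀ n, DCm M (n + 1 + 1) ≤ c ^ (n + 1) * DCm M (n + 1) := by
    intro n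
    have h := hc (n + 1) (by omega)
    have hq : 0 ≤ DCm M (n + 1 + 1) / DCm M (n + 1) := div_nonneg (hnn _) (hnn _)
    have h2 := pow_le_pow_left₀ (Real.rpow_nonneg hq _) h.le (n + 1)
    rw [one_div, Real.rpow_inv_natCast_pow hq (by omega)] at h2
    exact (div_le_iff₀ (hpos n)).1 h2
  have hmain : ∀ n j, DCm M (n + 1 + j) ≤ c ^ (j * n + j * (j + 1) / 2) * DCm M (n + 1) := by
    intro n j
    induction j with
    | zero => simp
    | succ j ih =>
      have e : (j + 1) * (j + 1 + 1) / 2 = j * (j + 1) / 2 + (j + 1) := by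
        rw [show (j + 1) * (j + 1 + 1) = j * (j + 1) + (j + 1) * 2 by ring,
          Nat.add_mul_div_right _ _ (by norm_num)]
      have hs := hstep (n + j)
      rw [show n + j + 1 = n + 1 + j by ring] at hs
      calc DCm M (n + 1 + (j + 1)) ≤ c ^ (n + 1 + j) * DCm M (n + 1 + j) := hs
        _ ≤ c ^ (n + 1 + j) * (c ^ (j * n + j * (j + 1) / 2) * DCm M (n + 1)) := by gcongr
        _ = _ := by
          rw [e, ← mul_assoc, ← pow_add]
          congr 2
          ring
  intro j r hr
  have hp : 0 < c ^ ((j * (j + 1)) / 2) := pow_pos hcp _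
  rw [← div_le_iff₀' hp]
  refine le_csInf ⟨_, 1, le_rfl, rfl⟩ ?_
  rintro x ⟨k, hk, rfl⟩
  obtain ⟨n, rfl⟩ : ∃ n, k = n + 1 := ⟨k - 1, by omega⟩
  rw [div_le_iff₀' hp, div_le_iff₀ (pow_pos hr j), Nat.add_sub_cancel]
  have hb : DCh1 M r ≤ DCm M (n + 1 + j) * r ^ (n + j) := by
    refine csInf_le ⟨0, ?_⟩ ⟨n + 1 + j, by omega, ?_⟩
    · rintro x ⟨k, -, rfl⟩
      exact mul_nonneg (hnn k) (by positivity)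
    · congr 2
      omega
  calc DCh1 M r ≤ DCm M (n + 1 + j) * r ^ (n + j) := hb
    _ ≤ (c ^ (j * n + j * (j + 1) / 2) * DCm M (n + 1)) * r ^ (n + j) := by
      gcongr
      exact hmain n j
    _ = _ := by
      rw [mul_pow, ← pow_mul, pow_add, pow_add]
      ring
end

section
/- Let ψ : ℂ^m → ℝ be a C^∞ compactly supported function. For every n ∈ ℕ there exists a constant C > 0 such that for every z ∈ ℂ^m and every v ∈ ℂ^m with v ≠ 0, the n-th (real Fréchet) derivative with respect to v of the function v ↦ ψ((z − v)/‖v‖)/‖v‖^{2m} satisfies ‖D_v^n [ψ((z − v)/‖v‖)/‖v‖^{2m}]‖ ≤ C / ‖v‖^{2m + n}; the constant C depends only on ψ, m and n (not on z or v). -/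
open scoped BigOperators

/-- Iterated derivative of a function precomposed with an affine map `w ↦ a + L w`. -/
lemma norm_iteratedFDeriv_affine_le {E G : Type*} [NormedAddCommGroup E] [NormedSpace ℝ E]
    [NormedAddCommGroup G] [NormedSpace ℝ G] (f : G → ℝ) (s : Set G) (hs : IsOpen s)
    (n : ℕ) (hf : ContDiffOn ℝ n f s) (a : G) (L : E →L[ℝ] G) (x : E) (hx : a + L x ∈ s) :
    ‖iteratedFDeriv ℝ n (fun w => f (a + L w)) x‖ ≤
      ‖iteratedFDeriv ℝ n f (a + L x)‖ * ‖L‖ ^ n := by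
  set t : Set G := (fun y => a + y) ⁻¹' s with ht
  have hto : IsOpen t := hs.preimage (by fun_prop)
  have hto' : IsOpen (L ⁻¹' t) := hto.preimage L.continuous
  have hg : ContDiffOn ℝ n (fun y => f (a + y)) t :=
    hf.comp (contDiff_const.add contDiff_id).contDiffOn (fun y hy => hy)
  have h1 := L.iteratedFDerivWithin_comp_right hg hto.uniqueDiffOn hto'.uniqueDiffOn
    (x := x) hx (i := n) le_rfl
  rw [iteratedFDerivWithin_of_isOpen n hto' (show x ∈ L ⁻¹' t from hx),
    iteratedFDerivWithin_of_isOpen n hto (show L x ∈ t from hx),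
    iteratedFDeriv_comp_add_left] at h1
  have h2 := (iteratedFDeriv ℝ n f (a + L x)).norm_compContinuousLinearMap_le (fun _ => L)
  rw [← h1] at h2
  simpa [Function.comp_def] using h2

/-- The bound in an abstract inner product space, with an arbitrary power of the norm. -/
lemma kernel_bound {E : Type*} [NormedAddCommGroup E] [InnerProductSpace ℂ E] [NormedSpace ℝ E]
    [ProperSpace E] (k : ℕ) (ψ : E → ℝ)
    (hψ : ContDiff ℝ (⊤ : ℕ∞) ψ) (hsupp : HasCompactSupport ψ) (n : ℕ) :
    ∃ C > (0 : ℝ), ∀ z v : E, v ≠ 0 →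
      ‖iteratedFDeriv ℝ n (fun w : E => ψ ((‖w‖⁻¹ : ℝ) • (z - w)) / ‖w‖ ^ k) v‖
        ≤ C / ‖v‖ ^ (k + n) := by
  let G : E × E → ℝ := fun p => ψ ((‖p.2‖⁻¹ : ℝ) • (p.1 - p.2)) / ‖p.2‖ ^ (k)
  let s : Set (E × E) := {p | p.2 ≠ 0}
  have hs : IsOpen s := isOpen_ne_fun continuous_snd continuous_const
  have hG : ContDiffOn ℝ n G s := by
    intro p hp
    have hp : p.2 ≠ 0 := hp
    have hn : ContDiffAt ℝ n (fun p : E × E => ‖p.2‖) p := contDiffAt_snd.norm ℂ hp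
    have hne : ‖p.2‖ ≠ 0 := norm_ne_zero_iff.2 hp
    refine ContDiffAt.contDiffWithinAt ?_
    refine ContDiffAt.div ?_ (hn.pow _) (pow_ne_zero _ hne)
    have h1 : ContDiffAt ℝ n (fun p : E × E => (‖p.2‖⁻¹ : ℝ) • (p.1 - p.2)) p :=
      (hn.inv hne).smul (contDiffAt_fst.sub contDiffAt_snd)
    exact ContDiffAt.comp p ((hψ.of_le (by exact_mod_cast (le_top : (n : ℕ∞) ≤ ⊤))).contDiffAt) h1
  obtain ⟨R, hR⟩ : ∃ R : ℝ, ∀ x : E, R < ‖x‖ → ψ x = 0 := by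
    obtain ⟨R, hR⟩ := hsupp.isCompact.isBounded.subset_closedBall (0 : E)
    refine ⟨R, fun x hx => image_eq_zero_of_notMem_tsupport fun h => ?_⟩
    have := hR h
    simp at this
    linarith
  have hK : IsCompact (Metric.closedBall (0 : E) (2 * |R| + 2) ×ˢ Metric.sphere (0 : E) 1) :=
    (isCompact_closedBall _ _).prod (isCompact_sphere _ _)
  have hcont : ContinuousOn (iteratedFDeriv ℝ n G) s :=
    ContinuousOn.continuousOn_iteratedFDeriv hG hs le_rfl
  obtain ⟨C, hC⟩ := hK.exists_bound_of_continuousOn (hcont.mono (by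
    rintro ⟨z, v⟩ ⟨-, hv⟩
    have hv : ‖v‖ = 1 := by simpa using hv
    exact norm_ne_zero_iff.1 (by simp [hv])))
  have hbound : ∀ z v : E, ‖v‖ = 1 → ‖iteratedFDeriv ℝ n G (z, v)‖ ≤ |C| + 1 := by
    intro z v hv
    by_cases hz : ‖z‖ ≤ 2 * |R| + 2
    · have := hC (z, v) ⟨by simpa using hz, by simpa using hv⟩
      linarith [le_abs_self C]
    · have hz : 2 * |R| + 2 < ‖z‖ := not_le.1 hz
      have hev : G =ᶠ[nhds (z, v)] fun _ => 0 := by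
        have ho : IsOpen {p : E × E | p.2 ≠ 0 ∧ ‖p.2‖ < 2 ∧ 2 * |R| + 2 < ‖p.1‖} :=
          hs.inter ((isOpen_lt continuous_snd.norm continuous_const).inter
            (isOpen_lt continuous_const continuous_fst.norm))
        filter_upwards [ho.mem_nhds (show (z, v) ∈ _ from
          ⟨norm_ne_zero_iff.1 (by simp [hv]), by simp [hv], hz⟩)] with p hp
        obtain ⟨h1, h2, h3⟩ := hp
        have : ψ ((‖p.2‖⁻¹ : ℝ) • (p.1 - p.2)) = 0 := by
          apply hR
          have hpos : 0 < ‖p.2‖ := norm_pos_iff.2 h1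
          rw [norm_smul, norm_inv, norm_norm, inv_mul_eq_div, lt_div_iff₀ hpos]
          have h4 := norm_sub_norm_le p.1 p.2
          nlinarith [le_abs_self R, abs_nonneg R]
        simp [G, this]
      rw [(hev.iteratedFDeriv (𝕜 := ℝ) n).eq_of_nhds]
      simp only [iteratedFDeriv_fun_zero, Pi.zero_apply, norm_zero]
      positivity
  refine ⟨|C| + 1, by positivity, fun z v hv => ?_⟩
  have hr : 0 < ‖v‖ := norm_pos_iff.2 hv
  set r := ‖v‖ with hrdef
  let L : E →L[ℝ] E × E := r⁻¹ • ContinuousLinearMap.inr ℝ E E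
  have hL : ‖L‖ ≤ r⁻¹ := by
    calc ‖L‖ ≤ ‖r⁻¹‖ * ‖ContinuousLinearMap.inr ℝ E E‖ :=
        norm_smul_le r⁻¹ (ContinuousLinearMap.inr ℝ E E)
      _ ≤ r⁻¹ * 1 := by
        rw [Real.norm_of_nonneg (by positivity)]
        gcongr
        exact ContinuousLinearMap.norm_inr_le_one ℝ E E
      _ = r⁻¹ := mul_one _
  have haff : ∀ w : E, ((r⁻¹ • z, 0) : E × E) + L w = (r⁻¹ • z, r⁻¹ • w) := by
    intro w; simp [L]
  have hfun : (fun w : E => ψ ((‖w‖⁻¹ : ℝ) • (z - w)) / ‖w‖ ^ (k)) =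
      fun w => ((r ^ (k))⁻¹ : ℝ) • G (((r⁻¹ • z, 0) : E × E) + L w) := by
    funext w
    rw [haff]
    simp only [G, norm_smul, norm_inv, Real.norm_of_nonneg hr.le, ← smul_sub, smul_smul,
      smul_eq_mul]
    have e1 : (r⁻¹ * ‖w‖)⁻¹ * r⁻¹ = ‖w‖⁻¹ := by
      rw [mul_inv, inv_inv, mul_right_comm, mul_inv_cancel₀ hr.ne', one_mul]
    rw [e1, mul_pow, inv_pow]
    field_simp
  have hmem : ((r⁻¹ • z, 0) : E × E) + L v ∈ s := by
    rw [haff]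
    exact smul_ne_zero (inv_ne_zero hr.ne') hv
  have hcd : ContDiffAt ℝ n (fun w => G (((r⁻¹ • z, 0) : E × E) + L w)) v :=
    ContDiffAt.comp v (hG.contDiffAt (hs.mem_nhds hmem))
      (contDiff_const.add L.contDiff).contDiffAt
  rw [hfun, iteratedFDeriv_const_smul_apply' hcd, norm_smul]
  have h1 := norm_iteratedFDeriv_affine_le G s hs n hG (r⁻¹ • z, 0) L v hmem
  have h2 : ‖iteratedFDeriv ℝ n G (((r⁻¹ • z, 0) : E × E) + L v)‖ ≤ |C| + 1 := by
    rw [haff]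
    apply hbound
    rw [norm_smul, norm_inv, Real.norm_of_nonneg hr.le, ← hrdef, inv_mul_cancel₀ hr.ne']
  rw [Real.norm_of_nonneg (by positivity)]
  calc (r ^ (k))⁻¹ * ‖iteratedFDeriv ℝ n (fun w => G (((r⁻¹ • z, 0) : E × E) + L w)) v‖
      ≤ (r ^ (k))⁻¹ * ((|C| + 1) * r⁻¹ ^ n) := by
        gcongr
        refine h1.trans ?_
        gcongr
    _ = (|C| + 1) / r ^ (k + n) := by
        rw [pow_add, inv_pow]
        field_simp

/-- If `ψ : ℂ^m → ℝ` is `C^∞` with compact support, then for every `n ∈ ℕ` there is a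
constant `C > 0` (depending only on `ψ`, `m`, `n`) such that for all `z` and all `v ≠ 0`,
the `n`-th real Fréchet derivative in `v` of `v ↦ ψ((z-v)/‖v‖)/‖v‖^{2m}` has norm at most
`C/‖v‖^{2m+n}`. -/
theorem stmt9 (m : ℕ) (ψ : EuclideanSpace ℂ (Fin m) → ℝ)
    (hψ : ContDiff ℝ (⊤ : ℕ∞) ψ) (hsupp : HasCompactSupport ψ) (n : ℕ) :
    ∃ C > (0 : ℝ), ∀ z v : EuclideanSpace ℂ (Fin m), v ≠ 0 →
      ‖iteratedFDeriv ℝ n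
          (fun w : EuclideanSpace ℂ (Fin m) => ψ ((‖w‖⁻¹ : ℝ) • (z - w)) / ‖w‖ ^ (2 * m))
          v‖
        ≤ C / ‖v‖ ^ (2 * m + n) := by
  exact kernel_bound (2 * m) ψ hψ hsupp n
end

section
/- Let 𝓜 be a regular sequence and f ∈ C^𝓜(U,X). Then for every open V with compact closure contained in U there exist δ > 0, Q > 0, and a function F : V × ℝ^m → ℂ which is continuous on V × ℝ^m and C^∞ on V × (ℝ^m ∖ {0}), such that F(u,0) = f(u) for all u ∈ V, and for every u ∈ V, every v ∈ ℝ^m with 0 < ‖v‖ < δ, every k ∈ ℕ and every 1 ≤ j ≤ m, |∂F/∂v_j(u,v) − (X_j F(·,v))(u)| ≤ Q^{k+1} m_k ‖v‖^k, where X_j acts on the u-variable. -/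
open scoped BigOperators

/-- Application of the complex vector field with coefficients `A` to `g`:
`(X g)(x) = ∑ l, A_l(x) ∂g/∂x_l (x)`. -/
noncomputable def Xapp {d : ℕ} (A : Fin d → (Fin d → ℝ) → ℂ)
    (g : (Fin d → ℝ) → ℂ) : (Fin d → ℝ) → ℂ :=
  fun x => ∑ l, A l x * fderiv ℝ g x (Pi.single l (1 : ℝ))

/-- `X^α f = X_1^{α_1} ∘ ⋯ ∘ X_m^{α_m} f` for the frame `X_j` with coefficients `a j`. -/
noncomputable def Xmulti {d m : ℕ} (a : Fin m → Fin d → (Fin d → ℝ) → ℂ)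
    (α : Fin m → ℕ) (f : (Fin d → ℝ) → ℂ) : (Fin d → ℝ) → ℂ :=
  ((List.ofFn (fun j : Fin m => (Xapp (a j))^[α j])).foldr (· ∘ ·) id) f

/-- `f ∈ C^𝓜(U, X)`: `f` is smooth on `U` and for every compact `K ⊆ U` there is `C > 0`
with `sup_K ‖X^α f‖ ≤ C^{|α|+1} M_{|α|}` for every multi-index `α`. -/
def CMvector {d m : ℕ} (M : ℕ → ℝ) (U : Set (Fin d → ℝ))
    (a : Fin m → Fin d → (Fin d → ℝ) → ℂ) (f : (Fin d → ℝ) → ℂ) : Prop :=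
  ContDiffOn ℝ (⊤ : ℕ∞) f U ∧
  ∀ K : Set (Fin d → ℝ), IsCompact K → K ⊆ U →
    ∃ C > (0 : ℝ), ∀ (α : Fin m → ℕ) (x : Fin d → ℝ), x ∈ K →
      ‖Xmulti a α f x‖ ≤ C ^ ((∑ j, α j) + 1) * M (∑ j, α j)


namespace DCProof

open Set Filter Topology

section alg
variable {d m : ℕ}

lemma Xapp_congr {U : Set (Fin d → ℝ)} (hU : IsOpen U) (A : Fin d → (Fin d → ℝ) → ℂ)
    {g h : (Fin d → ℝ) → ℂ} (hgh : EqOn g h U) : EqOn (Xapp A g) (Xapp A h) U := by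
  intro x hx
  have : g =ᶠ[𝓝 x] h := by
    filter_upwards [hU.mem_nhds hx] with y hy using hgh hy
  simp only [Xapp, this.fderiv_eq]

lemma Xapp_smooth {U : Set (Fin d → ℝ)} (hU : IsOpen U) {A : Fin d → (Fin d → ℝ) → ℂ}
    (hA : ∀ l, ContDiffOn ℝ (⊤ : ℕ∞) (A l) U)
    {g : (Fin d → ℝ) → ℂ} (hg : ContDiffOn ℝ (⊤ : ℕ∞) g U) :
    ContDiffOn ℝ (⊤ : ℕ∞) (Xapp A g) U := by
  unfold Xapp
  refine ContDiffOn.sum fun l _ => (hA l).mul ?_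
  exact (hg.fderiv_of_isOpen hU (by simp)).clm_apply contDiffOn_const

lemma Xapp_iter_smooth {U : Set (Fin d → ℝ)} (hU : IsOpen U) {A : Fin d → (Fin d → ℝ) → ℂ}
    (hA : ∀ l, ContDiffOn ℝ (⊤ : ℕ∞) (A l) U)
    {g : (Fin d → ℝ) → ℂ} (hg : ContDiffOn ℝ (⊤ : ℕ∞) g U) (n : ℕ) :
    ContDiffOn ℝ (⊤ : ℕ∞) ((Xapp A)^[n] g) U := by
  induction n with
  | zero => simpa using hg
  | succ n ih => rw [Function.iterate_succ_apply']; exact Xapp_smooth hU hA ih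

lemma Xapp_iter_congr {U : Set (Fin d → ℝ)} (hU : IsOpen U) (A : Fin d → (Fin d → ℝ) → ℂ)
    {g h : (Fin d → ℝ) → ℂ} (hgh : EqOn g h U) (n : ℕ) :
    EqOn ((Xapp A)^[n] g) ((Xapp A)^[n] h) U := by
  induction n with
  | zero => simpa using hgh
  | succ n ih => simp only [Function.iterate_succ_apply']; exact Xapp_congr hU A ih

lemma Xapp_iter_comm {U : Set (Fin d → ℝ)} (hU : IsOpen U) {A B : Fin d → (Fin d → ℝ) → ℂ}
    (hA : ∀ l, ContDiffOn ℝ (⊤ : ℕ∞) (A l) U)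
    (hcomm : ∀ (g : (Fin d → ℝ) → ℂ), ContDiffOn ℝ (⊤ : ℕ∞) g U →
      ∀ x ∈ U, Xapp B (Xapp A g) x = Xapp A (Xapp B g) x)
    {g : (Fin d → ℝ) → ℂ} (hg : ContDiffOn ℝ (⊤ : ℕ∞) g U) (n : ℕ) :
    EqOn (Xapp B ((Xapp A)^[n] g)) ((Xapp A)^[n] (Xapp B g)) U := by
  induction n with
  | zero => intro x _; rfl
  | succ n ih =>
    simp only [Function.iterate_succ_apply']
    exact fun x hx => (hcomm _ (Xapp_iter_smooth hU hA hg n) x hx).trans (Xapp_congr hU A ih hx)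

lemma Xmulti_succ (a : Fin (m+1) → Fin d → (Fin d → ℝ) → ℂ) (α : Fin (m+1) → ℕ)
    (f : (Fin d → ℝ) → ℂ) :
    Xmulti a α f = (Xapp (a 0))^[α 0] (Xmulti (fun i => a i.succ) (fun i => α i.succ) f) := by
  simp [Xmulti, List.ofFn_succ]

lemma Xmulti_smooth {U : Set (Fin d → ℝ)} (hU : IsOpen U)
    (a : Fin m → Fin d → (Fin d → ℝ) → ℂ)
    (ha : ∀ j l, ContDiffOn ℝ (⊤ : ℕ∞) (a j l) U)
    {f : (Fin d → ℝ) → ℂ} (hf : ContDiffOn ℝ (⊤ : ℕ∞) f U) (α : Fin m → ℕ) :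
    ContDiffOn ℝ (⊤ : ℕ∞) (Xmulti a α f) U := by
  induction m with
  | zero => simpa [Xmulti] using hf
  | succ m ih =>
    rw [Xmulti_succ]
    exact Xapp_iter_smooth hU (ha 0) (ih _ (fun j => ha j.succ) _) _

lemma Xmulti_step {U : Set (Fin d → ℝ)} (hU : IsOpen U)
    (a : Fin m → Fin d → (Fin d → ℝ) → ℂ)
    (ha : ∀ j l, ContDiffOn ℝ (⊤ : ℕ∞) (a j l) U)
    (hcomm : ∀ (j k : Fin m) (g : (Fin d → ℝ) → ℂ), ContDiffOn ℝ (⊤ : ℕ∞) g U →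
      ∀ x ∈ U, Xapp (a j) (Xapp (a k) g) x = Xapp (a k) (Xapp (a j) g) x)
    {f : (Fin d → ℝ) → ℂ} (hf : ContDiffOn ℝ (⊤ : ℕ∞) f U) (α : Fin m → ℕ) (j : Fin m) :
    EqOn (Xapp (a j) (Xmulti a α f)) (Xmulti a (α + Pi.single j 1) f) U := by
  induction m with
  | zero => exact j.elim0
  | succ m ih =>
    rw [Xmulti_succ, Xmulti_succ]
    refine Fin.cases ?_ (fun i => ?_) j
    · intro x _
      have h1 : (fun i : Fin m => (α + Pi.single (0 : Fin (m+1)) 1 : Fin (m+1) → ℕ) i.succ) = fun i => α i.succ := by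
        ext i; simp
      have h2 : (α + Pi.single (0 : Fin (m+1)) 1 : Fin (m+1) → ℕ) 0 = α 0 + 1 := by simp
      rw [h1, h2, Function.iterate_succ_apply']
    · have h1 : (fun l : Fin m => (α + Pi.single i.succ 1 : Fin (m+1) → ℕ) l.succ)
          = (fun l => α l.succ) + Pi.single i 1 := by
        ext l; simp [Pi.single_apply]
      have h2 : (α + Pi.single i.succ 1 : Fin (m+1) → ℕ) 0 = α 0 := by simp
      rw [h1, h2]
      have hs := Xmulti_smooth hU (fun i => a i.succ) (fun j => ha j.succ) hf (fun i => α i.succ)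
      refine (Xapp_iter_comm hU (ha 0) (hcomm i.succ 0) hs _).trans ?_
      exact Xapp_iter_congr hU _ (ih _ (fun j => ha j.succ)
        (fun j k => hcomm j.succ k.succ) _ _) _

/-- The homogeneous polynomial pieces (times `N!`). -/
noncomputable def Sx (g : (Fin m → ℕ) → (Fin d → ℝ) → ℂ) :
    ℕ → (Fin m → ℕ) → (Fin d → ℝ) → EuclideanSpace ℝ (Fin m) → ℂ
  | 0, α, u, _ => g α u
  | N+1, α, u, v => ∑ i, ((v i : ℝ) : ℂ) * Sx g N (α + Pi.single i 1) u v

variable (g : (Fin m → ℕ) → (Fin d → ℝ) → ℂ)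

lemma coord_contDiff (i : Fin m) :
    ContDiff ℝ (⊤ : ℕ∞) (fun v : EuclideanSpace ℝ (Fin m) => ((v i : ℝ) : ℂ)) :=
  (Complex.ofRealCLM ∘L (EuclideanSpace.proj i : EuclideanSpace ℝ (Fin m) →L[ℝ] ℝ)).contDiff

lemma coord_fderiv (i j : Fin m) (v : EuclideanSpace ℝ (Fin m)) :
    fderiv ℝ (fun v : EuclideanSpace ℝ (Fin m) => ((v i : ℝ) : ℂ)) v
      (EuclideanSpace.single j (1:ℝ)) = if i = j then 1 else 0 := by
  have := (Complex.ofRealCLM ∘L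
    (EuclideanSpace.proj i : EuclideanSpace ℝ (Fin m) →L[ℝ] ℝ)).hasFDerivAt (x := v)
  have h2 := this.fderiv
  have h3 : (fun v : EuclideanSpace ℝ (Fin m) => ((v i : ℝ) : ℂ)) = (Complex.ofRealCLM ∘L
    (EuclideanSpace.proj i : EuclideanSpace ℝ (Fin m) →L[ℝ] ℝ)) := rfl
  rw [h3, h2]
  by_cases h : i = j <;> simp [h]

lemma Sx_contDiff_v (N : ℕ) (α : Fin m → ℕ) (u : Fin d → ℝ) :
    ContDiff ℝ (⊤ : ℕ∞) (Sx g N α u) := by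
  induction N generalizing α with
  | zero => exact contDiff_const
  | succ N ih =>
    change ContDiff ℝ _ (fun v => ∑ i, ((v i : ℝ) : ℂ) * Sx g N (α + Pi.single i 1) u v)
    exact ContDiff.sum fun i _ => (coord_contDiff i).mul (ih _)

lemma Sx_contDiffOn {U : Set (Fin d → ℝ)} (hg : ∀ α, ContDiffOn ℝ (⊤ : ℕ∞) (g α) U)
    (N : ℕ) (α : Fin m → ℕ) :
    ContDiffOn ℝ (⊤ : ℕ∞) (fun p : (Fin d → ℝ) × EuclideanSpace ℝ (Fin m) => Sx g N α p.1 p.2)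
      (U ×ˢ univ) := by
  induction N generalizing α with
  | zero => exact (hg α).comp contDiffOn_fst (fun p hp => hp.1)
  | succ N ih =>
    simp only [Sx]
    exact ContDiffOn.sum fun i _ =>
      (((coord_contDiff i).comp contDiff_snd).contDiffOn).mul (ih _)

lemma Sx_contDiffOn_u {U : Set (Fin d → ℝ)} (hg : ∀ α, ContDiffOn ℝ (⊤ : ℕ∞) (g α) U)
    (N : ℕ) (α : Fin m → ℕ) (v : EuclideanSpace ℝ (Fin m)) :
    ContDiffOn ℝ (⊤ : ℕ∞) (fun u => Sx g N α u v) U := by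
  exact (Sx_contDiffOn g hg N α).comp (contDiffOn_id.prodMk contDiffOn_const)
    (fun u hu => ⟨hu, mem_univ _⟩)

lemma Sx_fderiv (N : ℕ) (α : Fin m → ℕ) (u : Fin d → ℝ) (v : EuclideanSpace ℝ (Fin m))
    (j : Fin m) :
    fderiv ℝ (Sx g (N+1) α u) v (EuclideanSpace.single j (1:ℝ))
      = ((N : ℂ) + 1) * Sx g N (α + Pi.single j 1) u v := by
  have hd : ∀ N α, DifferentiableAt ℝ (Sx g N α u) v := fun N α =>
    (Sx_contDiff_v g N α u).differentiable (by simp) v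
  have hc : ∀ i : Fin m, DifferentiableAt ℝ
      (fun v : EuclideanSpace ℝ (Fin m) => ((v i : ℝ) : ℂ)) v := fun i =>
    (coord_contDiff i).differentiable (by simp) v
  have key : ∀ N α, fderiv ℝ (Sx g (N+1) α u) v (EuclideanSpace.single j (1:ℝ))
      = Sx g N (α + Pi.single j 1) u v + ∑ i, ((v i : ℝ) : ℂ) *
        fderiv ℝ (Sx g N (α + Pi.single i 1) u) v (EuclideanSpace.single j (1:ℝ)) := by
    intro N α
    change fderiv ℝ (fun v => ∑ i, ((v i : ℝ) : ℂ) * Sx g N (α + Pi.single i 1) u v) v _ = _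
    rw [fderiv_fun_sum (fun i _ => (hc i).fun_mul (hd _ _)), _root_.sum_apply]
    simp_rw [fderiv_fun_mul (hc _) (hd _ _)]
    simp only [_root_.add_apply, _root_.smul_apply, coord_fderiv,
      smul_eq_mul, Finset.sum_add_distrib]
    simp
    ring
  induction N generalizing α with
  | zero =>
    rw [key]
    have : ∀ β, fderiv ℝ (Sx g 0 β u) v = 0 := fun β => fderiv_const_apply _
    simp [this]
  | succ N ih =>
    rw [key]
    simp_rw [ih]
    have : ∀ i : Fin m, α + Pi.single i 1 + Pi.single j 1 = α + Pi.single j 1 + Pi.single i 1 :=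
      fun i => add_right_comm _ _ _
    simp_rw [this]
    have e : Sx g (N+1) (α + Pi.single j 1) u v
      = ∑ i, ((v i : ℝ) : ℂ) * Sx g N (α + Pi.single j 1 + Pi.single i 1) u v := rfl
    simp_rw [mul_left_comm _ ((N:ℂ)+1), ← Finset.mul_sum]
    rw [← e]; push_cast; ring

lemma Xapp_sum {ι : Type*} (s : Finset ι) (A : Fin d → (Fin d → ℝ) → ℂ)
    (c : ι → ℂ) (h : ι → (Fin d → ℝ) → ℂ) (x : Fin d → ℝ)
    (hd : ∀ i, DifferentiableAt ℝ (h i) x) :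
    Xapp A (fun u => ∑ i ∈ s, c i * h i u) x = ∑ i ∈ s, c i * Xapp A (h i) x := by
  simp only [Xapp]
  rw [fderiv_fun_sum (fun i _ => (hd i).const_mul (c i))]
  simp_rw [_root_.sum_apply, fderiv_const_mul (hd _), Finset.mul_sum]
  rw [Finset.sum_comm]
  refine Finset.sum_congr rfl fun i _ => Finset.sum_congr rfl fun l _ => ?_
  simp; ring

lemma Sx_Xapp {U : Set (Fin d → ℝ)} (hU : IsOpen U) (a : Fin m → Fin d → (Fin d → ℝ) → ℂ)
    (hg : ∀ α, ContDiffOn ℝ (⊤ : ℕ∞) (g α) U)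
    (hstep : ∀ α j, EqOn (Xapp (a j) (g α)) (g (α + Pi.single j 1)) U)
    (N : ℕ) (α : Fin m → ℕ) (v : EuclideanSpace ℝ (Fin m)) (j : Fin m) (u : Fin d → ℝ)
    (hu : u ∈ U) :
    Xapp (a j) (fun u => Sx g N α u v) u = Sx g N (α + Pi.single j 1) u v := by
  induction N generalizing α with
  | zero => exact hstep α j hu
  | succ N ih =>
    simp only [Sx]
    refine (Xapp_sum Finset.univ (a j) (fun i => ((v i : ℝ) : ℂ))
      (fun i u => Sx g N (α + Pi.single i 1) u v) u (fun i => ?_)).trans ?_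
    · exact ((Sx_contDiffOn_u g hg N _ v).differentiableOn (by simp)).differentiableAt
        (hU.mem_nhds hu)
    · refine Finset.sum_congr rfl fun i _ => ?_
      rw [ih, add_right_comm]

lemma Sx_bound {C : ℝ} (M : ℕ → ℝ) (u : Fin d → ℝ)
    (hb : ∀ α : Fin m → ℕ, ‖g α u‖ ≤ C ^ ((∑ j, α j) + 1) * M (∑ j, α j))
    (N : ℕ) (α : Fin m → ℕ) (v : EuclideanSpace ℝ (Fin m)) :
    ‖Sx g N α u v‖ ≤ (m * ‖v‖) ^ N * (C ^ ((∑ j, α j) + N + 1) * M ((∑ j, α j) + N)) := by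
  induction N generalizing α with
  | zero => simpa [Sx] using hb α
  | succ N ih =>
    simp only [Sx]
    refine (norm_sum_le _ _).trans ?_
    have : ∀ i ∈ (Finset.univ : Finset (Fin m)),
        ‖((v i : ℝ) : ℂ) * Sx g N (α + Pi.single i 1) u v‖ ≤
        ‖v‖ * ((m * ‖v‖) ^ N * (C ^ ((∑ j, α j) + (N+1) + 1) * M ((∑ j, α j) + (N+1)))) := by
      intro i _
      rw [norm_mul]
      have h1 : ‖((v i : ℝ) : ℂ)‖ ≤ ‖v‖ := by
        rw [Complex.norm_real]; exact PiLp.norm_apply_le v i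
      have h2 := ih (α + Pi.single i 1)
      have h3 : ∑ j, (α + Pi.single i 1 : Fin m → ℕ) j = (∑ j, α j) + 1 := by
        simp [Finset.sum_add_distrib]
      rw [h3, show (∑ j, α j) + 1 + N = (∑ j, α j) + (N+1) by ring] at h2
      exact mul_le_mul h1 h2 (norm_nonneg _) (norm_nonneg _)
    refine (Finset.sum_le_sum this).trans (le_of_eq ?_)
    simp; ring

end alg

section num

lemma grow_le {mm q : ℕ → ℝ} {t c : ℝ} (hpos : ∀ k, 0 < mm k)
    (hq : ∀ k, mm (k+1) = q k * mm k) (hmono : Monotone q) (ht : 0 ≤ t) (k n : ℕ)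
    (h : t * q (k+n) ≤ c) (hq0 : ∀ k, 0 ≤ q k) :
    mm (k+n) * t^(k+n) ≤ c^n * (mm k * t^k) := by
  induction n with
  | zero => simp
  | succ n ih =>
    have h1 : t * q (k+n) ≤ c :=
      (mul_le_mul_of_nonneg_left (hmono (by omega)) ht).trans h
    have h0 : 0 ≤ t * q (k+n) := mul_nonneg ht (hq0 _)
    have h2 := ih h1
    calc mm (k+(n+1)) * t^(k+(n+1)) = (t * q (k+n)) * (mm (k+n) * t^(k+n)) := by
          rw [← add_assoc, hq]; ring
      _ ≤ c * (c^n * (mm k * t^k)) :=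
          mul_le_mul h1 h2 (mul_nonneg (hpos _).le (pow_nonneg ht _)) (h0.trans h1)
      _ = _ := by ring

lemma grow_ge {mm q : ℕ → ℝ} {t c : ℝ} (hpos : ∀ k, 0 < mm k)
    (hq : ∀ k, mm (k+1) = q k * mm k) (hmono : Monotone q) (ht : 0 ≤ t) (k n : ℕ)
    (h : c ≤ t * q k) (hc : 0 ≤ c) :
    c^n * (mm k * t^k) ≤ mm (k+n) * t^(k+n) := by
  induction n with
  | zero => simp
  | succ n ih =>
    have h1 : c ≤ t * q (k+n) :=
      h.trans (mul_le_mul_of_nonneg_left (hmono (by omega)) ht)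
    calc c^(n+1) * (mm k * t^k) = c * (c^n * (mm k * t^k)) := by ring
      _ ≤ (t * q (k+n)) * (mm (k+n) * t^(k+n)) :=
          mul_le_mul h1 ih (mul_nonneg (pow_nonneg hc _)
            (mul_nonneg (hpos _).le (pow_nonneg ht _))) (hc.trans h1)
      _ = _ := by rw [← add_assoc k n 1, hq]; ring

lemma num_bound {mm q : ℕ → ℝ} {t A B E : ℝ} (hpos : ∀ k, 0 < mm k)
    (hq : ∀ k, mm (k+1) = q k * mm k) (hmono : Monotone q) (hq0 : ∀ k, 0 ≤ q k)
    (hqB : ∀ k, q k ≤ B^k) (hA : 1 ≤ A) (hB : 1 ≤ B) (hE : E = 4 * A * B)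
    (ht : 0 < t) (N k : ℕ) (h1 : t * q N * E ≤ 2) (h2 : 1 ≤ t * q (N+1) * E) :
    A^(N+1) * (mm (N+1) * t^N) ≤ E^(k+1) * 2^k * (1/2)^N * (mm k * t^k) := by
  have hE0 : 0 < E := by rw [hE]; positivity
  have hABE : A * B ≤ E := by rw [hE]; nlinarith
  rcases le_or_gt k N with hk | hk
  · obtain ⟨n, rfl⟩ := Nat.exists_eq_add_of_le hk
    have g := grow_le (c := 2/E) hpos hq hmono ht.le k n ((le_div_iff₀ hE0).2 h1) hq0
    have hP : 0 < mm k * t^k := mul_pos (hpos _) (pow_pos ht _)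
    calc A^(k+n+1) * (mm (k+n+1) * t^(k+n))
        = A^(k+n+1) * (q (k+n) * (mm (k+n) * t^(k+n))) := by rw [hq]; ring
      _ ≤ A^(k+n+1) * (B^(k+n) * ((2/E)^n * (mm k * t^k))) := by
          gcongr
          · exact mul_nonneg (hpos _).le (pow_nonneg ht.le _)
          · exact hqB _
      _ = A * (A*B)^k * ((A*B) * (2/E))^n * (mm k * t^k) := by
          rw [mul_pow (A*B), mul_pow A B n, mul_pow A B k]; ring
      _ = A * (A*B)^k * (1/2)^n * (mm k * t^k) := by
          congr 3; rw [hE]; field_simp; norm_num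
      _ ≤ (A*B) * (A*B)^k * (1/2)^n * (mm k * t^k) := by
          gcongr; nlinarith
      _ ≤ E * E^k * (1/2)^n * (mm k * t^k) := by gcongr
      _ = _ := by
          rw [pow_add (1/2:ℝ) k n]
          have : (2:ℝ)^k * (1/2)^k = 1 := by rw [← mul_pow]; norm_num
          linear_combination (-E^(k+1) * (1/2)^n * (mm k * t^k)) * this
  · obtain ⟨n, rfl⟩ := Nat.exists_eq_add_of_le (show N+1 ≤ k from hk)
    have hc : 1/E ≤ t * q (N+1) := (div_le_iff₀ hE0).2 h2
    have g := grow_ge (c := 1/E) hpos hq hmono ht.le (N+1) n hc (by positivity)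
    have hP : 0 < mm (N+1+n) * t^(N+1+n) := mul_pos (hpos _) (pow_pos ht _)
    have hP1 : 0 < mm (N+1) * t^N := mul_pos (hpos _) (pow_pos ht _)
    have g2 : mm (N+1) * t^(N+1) ≤ E^n * (mm (N+1+n) * t^(N+1+n)) := by
      have := mul_le_mul_of_nonneg_left g (pow_nonneg hE0.le n)
      rw [← mul_assoc, ← mul_pow, mul_one_div_cancel hE0.ne', one_pow, one_mul] at this
      exact this
    calc A^(N+1) * (mm (N+1) * t^N)
        = A^(N+1) * (1 * (mm (N+1) * t^N)) := by rw [one_mul]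
      _ ≤ A^(N+1) * ((t * B^(N+1) * E) * (mm (N+1) * t^N)) := by
          gcongr
          refine h2.trans ?_
          gcongr
          exact hqB _
      _ = (A*B)^(N+1) * E * (mm (N+1) * t^(N+1)) := by rw [mul_pow]; ring
      _ ≤ E^(N+1) * E * (E^n * (mm (N+1+n) * t^(N+1+n))) := by
          gcongr
          exact mul_nonneg (hpos _).le (pow_nonneg ht.le _)
      _ = E^(N+1+n+1) * 1 * (mm (N+1+n) * t^(N+1+n)) := by ring
      _ ≤ E^(N+1+n+1) * (2^(N+1+n) * (1/2)^N) * (mm (N+1+n) * t^(N+1+n)) := by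
          gcongr
          have h3 : (2:ℝ)^(N+1+n) * (1/2)^N = 2^(1+n) := by
            rw [add_assoc, pow_add, mul_right_comm, ← mul_pow]; norm_num
          rw [h3]; exact one_le_pow₀ (by norm_num)
      _ = _ := by ring

/-- consequences of regularity -/
lemma reg_data {M : ℕ → ℝ} (h : DCRegular M) :
    (∀ k, 0 < DCm M k) ∧ ∃ q : ℕ → ℝ, ∃ B : ℝ, 1 ≤ B ∧ Monotone q ∧ (∀ k, 1 ≤ q k) ∧
      (∀ k, DCm M (k+1) = q k * DCm M k) ∧ (∀ k, q k ≤ B^k) ∧ Tendsto q atTop atTop := by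
  obtain ⟨-, h0, h1, hlc, ⟨B, hB⟩, hlim⟩ := h
  have hpos : ∀ k, 0 < DCm M k ∧ 0 < DCm M (k+1) := by
    intro k
    induction k with
    | zero => simp [h0, h1]
    | succ k ih =>
      refine ⟨ih.2, ?_⟩
      have := hlc (k+1) (by omega)
      simp only [Nat.add_sub_cancel] at this
      have h3 := pow_pos ih.2 2
      exact pos_of_mul_pos_right (h3.trans_le this) ih.1.le
  have hp : ∀ k, 0 < DCm M k := fun k => (hpos k).1
  have hmono : Monotone (fun k => DCm M (k+1) / DCm M k) := by
    refine monotone_nat_of_le_succ fun k => ?_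
    have := hlc (k+1) (by omega)
    simp only [Nat.add_sub_cancel] at this
    rw [div_le_div_iff₀ (hp _) (hp _)]
    nlinarith
  have hge : ∀ k, 1 ≤ DCm M (k+1) / DCm M k := by
    intro k
    have := hmono (Nat.zero_le k)
    simpa [h0, h1] using this
  have hstep : ∀ k, DCm M (k+1) = DCm M (k+1) / DCm M k * DCm M k := fun k =>
    (div_mul_cancel₀ _ (hp k).ne').symm
  refine ⟨hp, fun k => DCm M (k+1) / DCm M k, max B 1, le_max_right _ _, hmono, hge, hstep, ?_, ?_⟩
  · intro k
    rcases Nat.eq_zero_or_pos k with rfl | hk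
    · simp [h0, h1]
    · have hb := (hB k hk).trans (le_max_left B 1)
      have hx : 0 ≤ DCm M (k+1) / DCm M k := zero_le_one.trans (hge k)
      have := pow_le_pow_left₀ (Real.rpow_nonneg hx _) hb k
      rw [← Real.rpow_natCast (_ ^ _) k, ← Real.rpow_mul hx, one_div,
        inv_mul_cancel₀ (by positivity), Real.rpow_one] at this
      exact this
  · rcases tendsto_atTop_of_monotone hmono with h | ⟨l, hl⟩
    · exact h
    · exfalso
      have hle : ∀ k, DCm M (k+1) / DCm M k ≤ l := fun k => hmono.ge_of_tendsto hl k
      have hl0 : 0 ≤ l := zero_le_one.trans ((hge 0).trans (hle 0))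
      have hm : ∀ k, DCm M k ≤ l^k := by
        intro k
        induction k with
        | zero => simp [h0]
        | succ k ih =>
          rw [hstep, pow_succ']
          exact mul_le_mul (hle k) ih (hp k).le hl0
      obtain ⟨k, hk1, hk2⟩ := ((hlim.eventually_gt_atTop l).and (eventually_ge_atTop 1)).exists
      have : (DCm M k) ^ ((1:ℝ)/k) ≤ (l^k) ^ ((1:ℝ)/k) :=
        Real.rpow_le_rpow (hp k).le (hm k) (by positivity)
      rw [← Real.rpow_natCast, ← Real.rpow_mul hl0, mul_one_div_cancel (by positivity),
        Real.rpow_one] at this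
      linarith

end num

section bump
variable {m : ℕ}

/-- one-dimensional cutoff -/
noncomputable def psi (s : ℝ) : ℝ := Real.smoothTransition (2 - s)

lemma psi_contDiff : ContDiff ℝ (⊤ : ℕ∞) psi :=
  Real.smoothTransition.contDiff.comp (contDiff_const.sub contDiff_id)

lemma psi_one {s : ℝ} (h : s ≤ 1) : psi s = 1 :=
  Real.smoothTransition.one_of_one_le (by linarith)

lemma psi_zero {s : ℝ} (h : 2 ≤ s) : psi s = 0 :=
  Real.smoothTransition.zero_of_nonpos (by linarith)

lemma psi_nonneg (s : ℝ) : 0 ≤ psi s := Real.smoothTransition.nonneg _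
lemma psi_le_one (s : ℝ) : psi s ≤ 1 := Real.smoothTransition.le_one _

lemma deriv_psi_lt {s : ℝ} (h : s < 1) : deriv psi s = 0 := by
  have : psi =ᶠ[𝓝 s] fun _ => 1 := by
    filter_upwards [Iio_mem_nhds h] with x hx using psi_one (le_of_lt hx)
  rw [this.deriv_eq]; simp

lemma deriv_psi_gt {s : ℝ} (h : 2 < s) : deriv psi s = 0 := by
  have : psi =ᶠ[𝓝 s] fun _ => 0 := by
    filter_upwards [Ioi_mem_nhds h] with x hx using psi_zero (le_of_lt hx)
  rw [this.deriv_eq]; simp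

lemma deriv_psi_bound : ∃ L : ℝ, 0 ≤ L ∧ ∀ s, |deriv psi s| ≤ L := by
  have hc : Continuous (deriv psi) := psi_contDiff.continuous_deriv (by simp)
  obtain ⟨L, hL⟩ := (isCompact_Icc (a := (1:ℝ)) (b := 2)).exists_bound_of_continuousOn hc.continuousOn
  refine ⟨max L 0, le_max_right _ _, fun s => ?_⟩
  by_cases h1 : s < 1
  · simp [deriv_psi_lt h1]
  by_cases h2 : 2 < s
  · simp [deriv_psi_gt h2]
  exact (hL s ⟨not_lt.1 h1, not_lt.1 h2⟩).trans (le_max_left _ _)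

/-- cutoff at scale `1/lam` -/
noncomputable def phi (lam : ℝ) (v : EuclideanSpace ℝ (Fin m)) : ℂ := ((psi (lam^2 * ‖v‖^2) : ℝ) : ℂ)

lemma phi_contDiff (lam : ℝ) : ContDiff ℝ (⊤ : ℕ∞) (phi (m := m) lam) :=
  Complex.ofRealCLM.contDiff.comp
    (psi_contDiff.comp (contDiff_const.mul (contDiff_norm_sq ℝ)))

lemma phi_norm (lam : ℝ) (v : EuclideanSpace ℝ (Fin m)) : ‖phi lam v‖ ≤ 1 := by
  rw [phi, Complex.norm_real, Real.norm_eq_abs, abs_of_nonneg (psi_nonneg _)]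
  exact psi_le_one _

lemma phi_one {lam : ℝ} (hl : 0 ≤ lam) {v : EuclideanSpace ℝ (Fin m)} (h : lam * ‖v‖ ≤ 1) :
    phi lam v = 1 := by
  have : lam^2 * ‖v‖^2 ≤ 1 := by
    rw [← mul_pow]; exact pow_le_one₀ (by positivity) h
  simp [phi, psi_one this]

lemma phi_zero {lam : ℝ} {v : EuclideanSpace ℝ (Fin m)} (h : 2 ≤ lam * ‖v‖) :
    phi lam v = 0 := by
  have : 2 ≤ lam^2 * ‖v‖^2 := by
    rw [← mul_pow]; nlinarith
  simp [phi, psi_zero this]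

lemma phi_diff_norm (l1 l2 : ℝ) (v : EuclideanSpace ℝ (Fin m)) : ‖phi l1 v - phi l2 v‖ ≤ 1 := by
  rw [phi, phi, ← Complex.ofReal_sub, Complex.norm_real, Real.norm_eq_abs, abs_le]
  constructor <;> linarith [psi_nonneg (l1^2 * ‖v‖^2), psi_nonneg (l2^2 * ‖v‖^2),
    psi_le_one (l1^2 * ‖v‖^2), psi_le_one (l2^2 * ‖v‖^2)]

lemma phi_fderiv (lam : ℝ) (v : EuclideanSpace ℝ (Fin m)) (j : Fin m) :
    fderiv ℝ (phi lam) v (EuclideanSpace.single j (1:ℝ))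
      = ((deriv psi (lam^2 * ‖v‖^2) * (lam^2 * (2 * v j)) : ℝ) : ℂ) := by
  have h1 : HasFDerivAt (fun v : EuclideanSpace ℝ (Fin m) => ‖v‖^2) (2 • (innerSL ℝ v)) v :=
    (hasStrictFDerivAt_norm_sq v).hasFDerivAt
  have h2 := h1.const_mul (lam^2)
  have h3 : HasDerivAt psi (deriv psi (lam^2 * ‖v‖^2)) (lam^2 * ‖v‖^2) :=
    (psi_contDiff.differentiable (by simp) _).hasDerivAt
  have h4 := h3.comp_hasFDerivAt v h2
  have h5 := Complex.ofRealCLM.hasFDerivAt.comp v h4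
  have h6 : HasFDerivAt (phi lam) _ v := h5
  rw [h6.fderiv]
  simp [EuclideanSpace.inner_single_right]

lemma phi_fderiv_zero_lt {lam : ℝ} (hl : 0 ≤ lam) {v : EuclideanSpace ℝ (Fin m)}
    (h : lam * ‖v‖ < 1) (j : Fin m) :
    fderiv ℝ (phi lam) v (EuclideanSpace.single j (1:ℝ)) = 0 := by
  have : lam^2 * ‖v‖^2 < 1 := by
    rw [← mul_pow]; exact pow_lt_one₀ (by positivity) h (by norm_num)
  rw [phi_fderiv, deriv_psi_lt this]; simp

lemma phi_fderiv_zero_gt {lam : ℝ} {v : EuclideanSpace ℝ (Fin m)}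
    (h : 2 ≤ lam * ‖v‖) (j : Fin m) :
    fderiv ℝ (phi lam) v (EuclideanSpace.single j (1:ℝ)) = 0 := by
  have : 2 < lam^2 * ‖v‖^2 := by
    rw [← mul_pow]; nlinarith
  rw [phi_fderiv, deriv_psi_gt this]; simp

lemma phi_fderiv_bound {L : ℝ} (hL0 : 0 ≤ L) (hL : ∀ s, |deriv psi s| ≤ L) {lam : ℝ}
    (hl : 0 ≤ lam) (v : EuclideanSpace ℝ (Fin m)) (j : Fin m) :
    ‖fderiv ℝ (phi lam) v (EuclideanSpace.single j (1:ℝ))‖ ≤ 4 * L * lam := by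
  by_cases h : 2 ≤ lam * ‖v‖
  · rw [phi_fderiv_zero_gt h]; simp; positivity
  rw [phi_fderiv, Complex.norm_real, norm_mul]
  have h1 : ‖v j‖ ≤ ‖v‖ := PiLp.norm_apply_le v j
  have h2 : ‖lam^2 * (2 * v j)‖ = lam * (2 * (lam * ‖v j‖)) := by
    rw [norm_mul, norm_mul, norm_pow, Real.norm_of_nonneg hl]; norm_num; ring
  have h3 : lam * ‖v j‖ ≤ 2 := (mul_le_mul_of_nonneg_left h1 hl).trans (not_le.1 h).le
  rw [h2]
  calc _ ≤ L * (lam * (2 * 2)) := by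
        gcongr
        exact hL _
    _ = _ := by ring

end bump

section final
variable {d m : ℕ}

/-- degree-`N` term -/
noncomputable def Px (g : (Fin m → ℕ) → (Fin d → ℝ) → ℂ) (N : ℕ) (α : Fin m → ℕ)
    (u : Fin d → ℝ) (v : EuclideanSpace ℝ (Fin m)) : ℂ :=
  ((N.factorial : ℂ))⁻¹ * Sx g N α u v

variable (g : (Fin m → ℕ) → (Fin d → ℝ) → ℂ)

lemma Px_fderiv_zero (α : Fin m → ℕ) (u : Fin d → ℝ) (v w : EuclideanSpace ℝ (Fin m)) :
    fderiv ℝ (Px g 0 α u) v w = 0 := by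
  have : Px g 0 α u = fun _ => ((Nat.factorial 0 : ℕ) : ℂ)⁻¹ * g α u := rfl
  rw [this]; simp

lemma Px_fderiv_succ (N : ℕ) (α : Fin m → ℕ) (u : Fin d → ℝ) (v : EuclideanSpace ℝ (Fin m))
    (j : Fin m) :
    fderiv ℝ (Px g (N+1) α u) v (EuclideanSpace.single j (1:ℝ))
      = Px g N (α + Pi.single j 1) u v := by
  change fderiv ℝ (fun v => (((N+1).factorial : ℂ))⁻¹ * Sx g (N+1) α u v) v _ = _
  rw [fderiv_const_mul ((Sx_contDiff_v g (N+1) α u).differentiable (by simp) v)]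
  rw [_root_.smul_apply, Sx_fderiv, Px, Nat.factorial_succ, smul_eq_mul]
  have h1 : ((N:ℂ)+1) ≠ 0 := by exact_mod_cast Nat.succ_ne_zero N
  have h2 : ((N.factorial : ℕ) : ℂ) ≠ 0 := by exact_mod_cast Nat.factorial_ne_zero N
  push_cast
  field_simp

lemma Px_contDiff_v (N : ℕ) (α : Fin m → ℕ) (u : Fin d → ℝ) :
    ContDiff ℝ (⊤ : ℕ∞) (Px g N α u) := contDiff_const.mul (Sx_contDiff_v g N α u)

lemma term_fderiv (N : ℕ) (α : Fin m → ℕ) (u : Fin d → ℝ) (lam : ℝ)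
    (v w : EuclideanSpace ℝ (Fin m)) :
    fderiv ℝ (fun v => phi lam v * Px g N α u v) v w
      = fderiv ℝ (phi lam) v w * Px g N α u v + phi lam v * fderiv ℝ (Px g N α u) v w := by
  rw [fderiv_fun_mul ((phi_contDiff lam).differentiable (by simp) v)
    ((Px_contDiff_v g N α u).differentiable (by simp) v)]
  simp; ring

/-- summation by parts -/
lemma parts (φ : ℕ → ℂ) (p x : ℕ → ℂ) (h0 : p 0 = 0) (hs : ∀ N, p (N+1) = x N) (n : ℕ)
    (hn : φ n = 0) :
    ∑ N ∈ Finset.range n, φ N * p N = ∑ N ∈ Finset.range n, φ (N+1) * x N := by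
  have h1 := Finset.sum_range_succ' (fun N => φ N * p N) n
  have h2 := Finset.sum_range_succ (fun N => φ N * p N) n
  rw [h2] at h1
  simp only [hn, h0, hs] at h1
  simpa using h1

theorem main (M : ℕ → ℝ) (hreg : DCRegular M)
    (U : Set (Fin d → ℝ)) (hU : IsOpen U)
    (a : Fin m → Fin d → (Fin d → ℝ) → ℂ)
    (hg : ∀ α, ContDiffOn ℝ (⊤ : ℕ∞) (g α) U)
    (hstep : ∀ α j, EqOn (Xapp (a j) (g α)) (g (α + Pi.single j 1)) U)
    (V : Set (Fin d → ℝ)) (hV : IsOpen V) (hVU : V ⊆ U) (C : ℝ) (hC : 1 ≤ C)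
    (hb : ∀ (α : Fin m → ℕ), ∀ u ∈ V, ‖g α u‖ ≤ C ^ ((∑ j, α j) + 1) * M (∑ j, α j)) :
    ∃ Q > (0 : ℝ),
      ∃ F : (Fin d → ℝ) → EuclideanSpace ℝ (Fin m) → ℂ,
        ContinuousOn (fun p : (Fin d → ℝ) × EuclideanSpace ℝ (Fin m) => F p.1 p.2)
          (V ×ˢ Set.univ) ∧
        ContDiffOn ℝ (⊤ : ℕ∞) (fun p : (Fin d → ℝ) × EuclideanSpace ℝ (Fin m) => F p.1 p.2)
          (V ×ˢ {v : EuclideanSpace ℝ (Fin m) | v ≠ 0}) ∧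
        (∀ u ∈ V, F u 0 = g 0 u) ∧
        (∀ u ∈ V, ∀ v : EuclideanSpace ℝ (Fin m), 0 < ‖v‖ →
          ∀ (k : ℕ) (j : Fin m),
            ‖fderiv ℝ (F u) v (EuclideanSpace.single j (1 : ℝ)) -
                Xapp (a j) (fun u' => F u' v) u‖
              ≤ Q ^ (k + 1) * DCm M k * ‖v‖ ^ k) := by
  obtain ⟨hpos, q, B, hB, hmono, hq1, hq, hqB, hqlim⟩ := reg_data hreg
  obtain ⟨L, hL0, hL⟩ := deriv_psi_bound
  have hm0 : DCm M 0 = 1 := hreg.2.1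
  have hq0 : ∀ k, 0 ≤ q k := fun k => zero_le_one.trans (hq1 k)
  obtain ⟨A, hAdef⟩ : ∃ A : ℝ, A = 2 * (m+1) * C^2 := ⟨_, rfl⟩
  have hm1 : (1:ℝ) ≤ m + 1 := by linarith [(Nat.cast_nonneg m : (0:ℝ) ≤ m)]
  have hC2 : 1 ≤ C^2 := one_le_pow₀ hC
  have hA : 1 ≤ A := by rw [hAdef]; nlinarith
  obtain ⟨E, hE⟩ : ∃ E : ℝ, E = 4 * A * B := ⟨_, rfl⟩
  have hE0 : 0 < E := by rw [hE]; positivity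
  have hMfac : ∀ k, M k = DCm M k * k.factorial := fun k => by
    rw [DCm, div_mul_cancel₀]; exact_mod_cast Nat.factorial_ne_zero k
  -- bounds for the homogeneous pieces
  have hfacnorm : ∀ N : ℕ, ‖((N.factorial : ℂ))⁻¹‖ = ((N.factorial : ℝ))⁻¹ := fun N => by
    rw [norm_inv, Complex.norm_natCast]
  have bP0 : ∀ u ∈ V, ∀ N (v : EuclideanSpace ℝ (Fin m)),
      ‖Px g N 0 u v‖ ≤ A^(N+1) * (DCm M N * ‖v‖^N) := by
    intro u hu N v
    have h := Sx_bound g M u (fun α => hb α u hu) N 0 v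
    simp only [Pi.zero_apply, Finset.sum_const_zero, zero_add] at h
    have hN : (0:ℝ) < N.factorial := by exact_mod_cast Nat.factorial_pos N
    rw [Px, norm_mul, hfacnorm]
    have hmN := hpos N
    calc _ ≤ ((N.factorial : ℝ))⁻¹ * ((m * ‖v‖) ^ N * (C ^ (N + 1) * M N)) := by gcongr
      _ = m^N * C^(N+1) * (DCm M N * ‖v‖^N) := by rw [hMfac]; field_simp; rw [mul_pow]
      _ ≤ A^(N+1) * (DCm M N * ‖v‖^N) := by
        gcongr
        calc (m:ℝ)^N * C^(N+1) ≤ (m+1)^(N+1) * (C^2)^(N+1) := by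
              gcongr
              · calc (m:ℝ)^N ≤ (m+1)^N := by gcongr; linarith
                  _ ≤ (m+1)^(N+1) := pow_le_pow_right₀ hm1 (by omega)
              · nlinarith
          _ = ((m+1) * C^2)^(N+1) := by rw [mul_pow]
          _ ≤ A^(N+1) := by
              rw [hAdef]; gcongr; nlinarith
  have bP1 : ∀ u ∈ V, ∀ N (v : EuclideanSpace ℝ (Fin m)) (j : Fin m),
      ‖Px g N (0 + Pi.single j 1) u v‖ ≤ A^(N+1) * (DCm M (N+1) * ‖v‖^N) := by
    intro u hu N v j
    have h := Sx_bound g M u (fun α => hb α u hu) N (0 + Pi.single j 1) v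
    have hs : ∑ i, (0 + Pi.single j 1 : Fin m → ℕ) i = 1 := by simp
    rw [hs, add_comm 1 N] at h
    have hN : (0:ℝ) < N.factorial := by exact_mod_cast Nat.factorial_pos N
    rw [Px, norm_mul, hfacnorm]
    have hmN := hpos (N+1)
    calc _ ≤ ((N.factorial : ℝ))⁻¹ * ((m * ‖v‖) ^ N * (C ^ (N + 1 + 1) * M (N+1))) := by gcongr
      _ = m^N * C^(N+1+1) * (N+1) * (DCm M (N+1) * ‖v‖^N) := by
          rw [hMfac, Nat.factorial_succ]; push_cast; field_simp; rw [mul_pow]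
      _ ≤ A^(N+1) * (DCm M (N+1) * ‖v‖^N) := by
        gcongr
        have h2N : ((N:ℝ)+1) ≤ 2^(N+1) := by
          have := (Nat.lt_two_pow_self (n := N+1)).le
          exact_mod_cast this
        calc (m:ℝ)^N * C^(N+1+1) * (N+1) ≤ (m+1)^(N+1) * (C^2)^(N+1) * 2^(N+1) := by
              gcongr
              · calc (m:ℝ)^N ≤ (m+1)^N := by gcongr; linarith
                  _ ≤ (m+1)^(N+1) := pow_le_pow_right₀ hm1 (by omega)
              · rw [← pow_mul]; exact pow_le_pow_right₀ hC (by omega)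
          _ = A^(N+1) := by rw [hAdef, mul_pow, mul_pow]; ring
  -- the cutoffs
  let lam : ℕ → ℝ := fun N => E * q N
  have hlam0 : ∀ N, 0 ≤ lam N := fun N => mul_nonneg hE0.le (hq0 N)
  have hlammono : Monotone lam := fun i j hij => mul_le_mul_of_nonneg_left (hmono hij) hE0.le
  have hlamlim : Tendsto lam atTop atTop := hqlim.const_mul_atTop hE0
  let T : ℕ → (Fin d → ℝ) → EuclideanSpace ℝ (Fin m) → ℂ :=
    fun N u v => phi (lam N) v * Px g N 0 u v
  have hTsmooth : ∀ N, ContDiffOn ℝ (⊤ : ℕ∞)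
      (fun p : (Fin d → ℝ) × EuclideanSpace ℝ (Fin m) => T N p.1 p.2) (V ×ˢ univ) := by
    intro N
    refine ((phi_contDiff (lam N)).comp contDiff_snd).contDiffOn.mul ?_
    exact contDiffOn_const.mul ((Sx_contDiffOn g hg N 0).mono (prod_mono hVU subset_rfl))
  have hTbound : ∀ N, ∀ p ∈ V ×ˢ (univ : Set (EuclideanSpace ℝ (Fin m))),
      ‖T N p.1 p.2‖ ≤ A * (1/2)^N := by
    rintro N ⟨u, v⟩ ⟨hu, -⟩
    by_cases h : 2 ≤ lam N * ‖v‖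
    · simp only [T, phi_zero h, zero_mul, norm_zero]; positivity
    have h' : ‖v‖ * q (0+N) ≤ 2/E := by
      rw [le_div_iff₀ hE0, zero_add]
      have := (not_le.1 h).le
      simp only [lam] at this
      linarith
    have g1 := grow_le hpos hq hmono (norm_nonneg v) 0 N h' hq0
    simp only [zero_add, hm0, pow_zero, mul_one] at g1
    calc ‖T N u v‖ ≤ 1 * (A^(N+1) * (DCm M N * ‖v‖^N)) := by
          simp only [T]
          rw [norm_mul]
          exact mul_le_mul (phi_norm _ _) (bP0 u hu N v) (norm_nonneg _) zero_le_one
      _ ≤ 1 * (A^(N+1) * (2/E)^N) := by gcongr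
      _ = A * (A * (2/E))^N := by rw [mul_pow]; ring
      _ ≤ A * (1/2)^N := by
          gcongr
          rw [hE, ← mul_div_assoc, div_le_div_iff₀ (by positivity) (by norm_num)]
          nlinarith
  -- local finiteness
  have hfin : ∀ r : ℝ, 0 < r → ∃ n, ∀ v : EuclideanSpace ℝ (Fin m), r < ‖v‖ → ∀ N, n ≤ N →
      2 ≤ lam N * ‖v‖ := by
    intro r hr
    obtain ⟨n, hn⟩ := (hlamlim.eventually_ge_atTop (2/r)).exists
    refine ⟨n, fun v hv N hN => ?_⟩
    have h1 : 2/r ≤ lam N := hn.trans (hlammono hN)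
    calc (2:ℝ) = 2/r * r := by field_simp
      _ ≤ lam N * ‖v‖ := by gcongr; exact hlam0 N
  have hFsum : ∀ n (u : Fin d → ℝ) (v : EuclideanSpace ℝ (Fin m)),
      (∀ N, n ≤ N → 2 ≤ lam N * ‖v‖) → ∑' N, T N u v = ∑ N ∈ Finset.range n, T N u v := by
    intro n u v h
    refine tsum_eq_sum fun N hN => ?_
    have hN' : n ≤ N := by simpa using hN
    simp only [T, phi_zero (h N hN'), zero_mul]
  let D : ℝ := 4 * L * E + 1
  have hD : 1 ≤ D := by have : 0 ≤ 4 * L * E := by positivity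
                        simp only [D]; linarith
  refine ⟨2 * D * (2 * E), by positivity, fun u v => ∑' N, T N u v, ?_, ?_, ?_, ?_⟩
  · refine continuousOn_tsum (u := fun N => A * (1/2)^N) (fun N => (hTsmooth N).continuousOn) ?_ hTbound
    exact (summable_geometric_two).mul_left A
  · rintro ⟨u, v⟩ ⟨hu, hv⟩
    have hv0 : 0 < ‖v‖ := norm_pos_iff.2 hv
    obtain ⟨n, hn⟩ := hfin (‖v‖/2) (by positivity)
    have hs : ContDiffAt ℝ (⊤ : ℕ∞) (fun p : (Fin d → ℝ) × EuclideanSpace ℝ (Fin m) =>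
        ∑ N ∈ Finset.range n, T N p.1 p.2) (u, v) := by
      refine ContDiffAt.sum fun N _ => (hTsmooth N).contDiffAt ?_
      exact (hV.prod isOpen_univ).mem_nhds ⟨hu, mem_univ _⟩
    refine (hs.congr_of_eventuallyEq ?_).contDiffWithinAt
    have ho : IsOpen {p : (Fin d → ℝ) × EuclideanSpace ℝ (Fin m) | ‖v‖/2 < ‖p.2‖} :=
      isOpen_lt continuous_const (continuous_snd.norm)
    filter_upwards [ho.mem_nhds (show ‖v‖/2 < ‖v‖ by linarith)] with p hp
    exact hFsum n p.1 p.2 (hn p.2 hp)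
  · intro u hu
    have : ∀ N, N ≠ 0 → T N u 0 = 0 := by
      intro N hN
      obtain ⟨N, rfl⟩ := Nat.exists_eq_succ_of_ne_zero hN
      simp [T, Px, Sx]
    change ∑' N, T N u 0 = g 0 u
    rw [tsum_eq_single 0 this]
    simp [T, Px, Sx, phi_one (hlam0 0) (v := (0 : EuclideanSpace ℝ (Fin m))) (by simp)]
  · intro u hu v hv k j
    obtain ⟨n, hn⟩ := hfin (‖v‖/2) (by positivity)
    have hvv : ‖v‖/2 < ‖v‖ := by linarith
    have e1 : (fun v => ∑' N, T N u v) =ᶠ[𝓝 v] fun v => ∑ N ∈ Finset.range n, T N u v := by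
      have ho : IsOpen {p : EuclideanSpace ℝ (Fin m) | ‖v‖/2 < ‖p‖} :=
        isOpen_lt continuous_const continuous_norm
      filter_upwards [ho.mem_nhds hvv] with p hp
      exact hFsum n u p (hn p hp)
    have e2 : (fun u' => ∑' N, T N u' v) = fun u' => ∑ N ∈ Finset.range n,
        (phi (lam N) v * ((N.factorial : ℂ))⁻¹) * Sx g N 0 u' v := by
      ext u'
      rw [hFsum n u' v (hn v hvv)]
      simp only [T, Px, mul_assoc]
    have e3 : Xapp (a j) (fun u' => ∑' N, T N u' v) u = ∑ N ∈ Finset.range n,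
        phi (lam N) v * Px g N (0 + Pi.single j 1) u v := by
      rw [e2]
      refine (Xapp_sum (Finset.range n) (a j) (fun N => phi (lam N) v * ((N.factorial : ℂ))⁻¹)
        (fun N u' => Sx g N 0 u' v) u fun N => ?_).trans ?_
      · exact ((Sx_contDiffOn_u g hg N _ v).differentiableOn (by simp)).differentiableAt
          (hU.mem_nhds (hVU hu))
      · refine Finset.sum_congr rfl fun N _ => ?_
        rw [Sx_Xapp g hU a hg hstep N 0 v j u (hVU hu), Px, mul_assoc]
    have e4 : fderiv ℝ (fun v => ∑' N, T N u v) v (EuclideanSpace.single j (1:ℝ))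
        = ∑ N ∈ Finset.range n,
          (fderiv ℝ (phi (lam N)) v (EuclideanSpace.single j (1:ℝ)) * Px g N 0 u v)
          + ∑ N ∈ Finset.range n, phi (lam (N+1)) v * Px g N (0 + Pi.single j 1) u v := by
      rw [e1.fderiv_eq, fderiv_fun_sum, _root_.sum_apply]
      · simp only [T]
        simp_rw [term_fderiv]
        rw [Finset.sum_add_distrib]
        congr 1
        exact parts (fun N => phi (lam N) v) _ _ (Px_fderiv_zero g 0 u v _)
          (fun N => Px_fderiv_succ g N 0 u v j) n (phi_zero (hn v hvv n le_rfl))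
      · intro N _
        exact ((phi_contDiff (lam N)).differentiable (by simp) v).fun_mul
          ((Px_contDiff_v g N 0 u).differentiable (by simp) v)
    rw [e3]
    change ‖fderiv ℝ (fun v => ∑' N, T N u v) v (EuclideanSpace.single j (1:ℝ)) - _‖ ≤ _
    rw [e4, add_sub_assoc, ← Finset.sum_sub_distrib, ← Finset.sum_add_distrib]
    have hterm : ∀ N ∈ Finset.range n,
        ‖fderiv ℝ (phi (lam N)) v (EuclideanSpace.single j (1:ℝ)) * Px g N 0 u v
          + (phi (lam (N+1)) v * Px g N (0 + Pi.single j 1) u v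
            - phi (lam N) v * Px g N (0 + Pi.single j 1) u v)‖
        ≤ D * (E^(k+1) * 2^k * (1/2)^N * (DCm M k * ‖v‖^k)) := by
      intro N _
      have hmk := hpos k
      have hnn : 0 ≤ D * (E^(k+1) * 2^k * (1/2)^N * (DCm M k * ‖v‖^k)) := by positivity
      rw [← sub_mul]
      by_cases h1 : 2 ≤ lam N * ‖v‖
      · have h2 : 2 ≤ lam (N+1) * ‖v‖ := h1.trans (by gcongr; exact hlammono (by omega))
        rw [phi_zero h1, phi_zero h2, phi_fderiv_zero_gt h1]
        simpa using hnn
      by_cases h2 : lam (N+1) * ‖v‖ < 1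
      · have h3 : lam N * ‖v‖ < 1 := lt_of_le_of_lt (by gcongr; exact hlammono (by omega)) h2
        rw [phi_one (hlam0 _) h2.le, phi_one (hlam0 _) h3.le, phi_fderiv_zero_lt (hlam0 _) h3]
        simpa using hnn
      have nb := num_bound hpos hq hmono hq0 hqB hA hB hE hv N k
        (by have := (not_le.1 h1).le; simp only [lam] at this; linarith)
        (by have := (not_lt.1 h2); simp only [lam] at this; linarith)
      calc _ ≤ (4 * L * lam N) * (A^(N+1) * (DCm M N * ‖v‖^N))
              + 1 * (A^(N+1) * (DCm M (N+1) * ‖v‖^N)) := by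
            refine (norm_add_le _ _).trans (add_le_add ?_ ?_)
            · rw [norm_mul]
              exact mul_le_mul (phi_fderiv_bound hL0 hL (hlam0 N) v j) (bP0 u hu N v)
                (norm_nonneg _) (by have := hlam0 N; positivity)
            · rw [norm_mul]
              exact mul_le_mul (phi_diff_norm _ _ _) (bP1 u hu N v j) (norm_nonneg _) zero_le_one
        _ = D * (A^(N+1) * (DCm M (N+1) * ‖v‖^N)) := by
            simp only [D, lam]; rw [hq]; ring
        _ ≤ _ := by gcongr
    refine (norm_sum_le _ _).trans ((Finset.sum_le_sum hterm).trans ?_)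
    have hmk := hpos k
    have hgeo : ∑ N ∈ Finset.range n, ((1:ℝ)/2)^N ≤ 2 := sum_geometric_two_le n
    calc ∑ N ∈ Finset.range n, D * (E^(k+1) * 2^k * (1/2)^N * (DCm M k * ‖v‖^k))
        = (D * (E^(k+1) * 2^k * (DCm M k * ‖v‖^k))) * ∑ N ∈ Finset.range n, ((1:ℝ)/2)^N := by
          rw [Finset.mul_sum]
          exact Finset.sum_congr rfl fun N _ => by ring
      _ ≤ (D * (E^(k+1) * 2^k * (DCm M k * ‖v‖^k))) * 2 := by gcongr
      _ = (2 * D) * (2^k * E^(k+1)) * DCm M k * ‖v‖^k := by ring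
      _ ≤ (2 * D)^(k+1) * (2^(k+1) * E^(k+1)) * DCm M k * ‖v‖^k := by
          gcongr
          · exact le_self_pow₀ (by linarith) (by omega)
          · norm_num
          · omega
      _ = _ := by rw [mul_pow (2*D), mul_pow 2 E]

end final

end DCProof

/-- Theorem 2.7 (existence of almost analytic extensions along a commuting frame).
If `f ∈ C^𝓜(U,X)` for a commuting system `X = (X_1,…,X_m)` of smooth complex vector
fields on the open neighbourhood `U ⊆ ℝ^d` of `0`, then for every open `V ⋐ U` there are
`δ, Q > 0` and `F : V × ℝ^m → ℂ`, continuous on `V × ℝ^m` and `C^∞` on `V × (ℝ^m∖{0})`,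
with `F(u,0) = f(u)` and `|∂F/∂v_j(u,v) − X_j F(·,v)(u)| ≤ Q^{k+1} m_k ‖v‖^k`
for `u ∈ V`, `0 < ‖v‖ < δ`, `k ∈ ℕ`, `1 ≤ j ≤ m`. -/
theorem stmt10 (d m : ℕ) (M : ℕ → ℝ) (hreg : DCRegular M)
    (U : Set (Fin d → ℝ)) (hU : IsOpen U) (hU0 : (0 : Fin d → ℝ) ∈ U)
    (a : Fin m → Fin d → (Fin d → ℝ) → ℂ)
    (ha : ∀ j l, ContDiffOn ℝ (⊤ : ℕ∞) (a j l) U)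
    (hcomm : ∀ (j k : Fin m) (g : (Fin d → ℝ) → ℂ), ContDiffOn ℝ (⊤ : ℕ∞) g U →
      ∀ x ∈ U, Xapp (a j) (Xapp (a k) g) x = Xapp (a k) (Xapp (a j) g) x)
    (f : (Fin d → ℝ) → ℂ) (hf : CMvector M U a f)
    (V : Set (Fin d → ℝ)) (hV : IsOpen V) (hVc : IsCompact (closure V))
    (hVU : closure V ⊆ U) :
    ∃ δ > (0 : ℝ), ∃ Q > (0 : ℝ),
      ∃ F : (Fin d → ℝ) → EuclideanSpace ℝ (Fin m) → ℂ,
        ContinuousOn (fun p : (Fin d → ℝ) × EuclideanSpace ℝ (Fin m) => F p.1 p.2)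
          (V ×ˢ Set.univ) ∧
        ContDiffOn ℝ (⊤ : ℕ∞) (fun p : (Fin d → ℝ) × EuclideanSpace ℝ (Fin m) => F p.1 p.2)
          (V ×ˢ {v : EuclideanSpace ℝ (Fin m) | v ≠ 0}) ∧
        (∀ u ∈ V, F u 0 = f u) ∧
        (∀ u ∈ V, ∀ v : EuclideanSpace ℝ (Fin m), 0 < ‖v‖ → ‖v‖ < δ →
          ∀ (k : ℕ) (j : Fin m),
            ‖fderiv ℝ (F u) v (EuclideanSpace.single j (1 : ℝ)) -
                Xapp (a j) (fun u' => F u' v) u‖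
              ≤ Q ^ (k + 1) * DCm M k * ‖v‖ ^ k) := by
  obtain ⟨hfs, hfb⟩ := hf
  obtain ⟨C, hC, hCb⟩ := hfb (closure V) hVc hVU
  obtain ⟨Q, hQ, F, h1, h2, h3, h4⟩ := DCProof.main (fun α => Xmulti a α f) M hreg U hU a
    (fun α => DCProof.Xmulti_smooth hU a ha hfs α)
    (fun α j => DCProof.Xmulti_step hU a ha hcomm hfs α j) V hV (subset_closure.trans hVU)
    (max C 1) (le_max_right _ _) (fun α u hu => (hCb α u (subset_closure hu)).trans
      (mul_le_mul_of_nonneg_right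
        (pow_le_pow_left₀ hC.le (le_max_left _ _) _) (hreg.1 _)))
  refine ⟨1, one_pos, Q, hQ, F, h1, h2, fun u hu => ?_, fun u hu v hv _ k j => h4 u hu v hv k j⟩
  rw [h3 u hu]
  have hid : ∀ n : ℕ, ((List.ofFn (fun _ : Fin n =>
      (id : ((Fin d → ℝ) → ℂ) → ((Fin d → ℝ) → ℂ)))).foldr (· ∘ ·) id) = id := by
    intro n
    induction n with
    | zero => simp
    | succ n ih => rw [List.ofFn_succ, List.foldr_cons, ih]; rfl
  change ((List.ofFn (fun _ : Fin m =>
      (id : ((Fin d → ℝ) → ℂ) → ((Fin d → ℝ) → ℂ)))).foldr (· ∘ ·) id) f u = f u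
  rw [hid]; rfl
end

section
/- Let Z, z′ ∈ ℂ^m, let v ∈ ℝ^m with v ≠ 0 (viewed inside ℂ^m), let ζ ∈ ℂ^m, let η ∈ ℂ with η² = Σ_j ζ_j², and let κ′ > 0 and c♯ > 0. Assume: (i) Re[ i ζ·(Z − z′) − η·⟨Z − z′⟩² ] ≤ −κ′·‖ζ‖·‖Z − z′‖²; (ii) Re(ζ)·v ≥ c♯·‖v‖·‖ζ‖; (iii) ‖v‖ ≤ κ′c♯/4 and ‖v‖ ≤ c♯/2. Then Re[ i ζ·(Z + iv − z′) − η·⟨Z + iv − z′⟩² ] ≤ −(c♯/4)·‖v‖·‖ζ‖. -/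
open scoped BigOperators

/-- The complex bilinear dot product `a·b = ∑ j, a_j b_j` on `ℂ^m`. -/
noncomputable def cdot {m : ℕ} (a b : EuclideanSpace ℂ (Fin m)) : ℂ := ∑ j, a j * b j

theorem norm_cdot_le {m : ℕ} (a b : EuclideanSpace ℂ (Fin m)) :
    ‖cdot a b‖ ≤ ‖a‖ * ‖b‖ := by
  unfold cdot
  rw [EuclideanSpace.norm_eq, EuclideanSpace.norm_eq]
  refine (norm_sum_le _ _).trans ?_
  simp only [norm_mul]
  exact Real.sum_mul_le_sqrt_mul_sqrt _ _ _

theorem cdot_shift {m : ℕ} (ζ W v : EuclideanSpace ℂ (Fin m)) (c : ℂ) :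
    cdot ζ (W + c • v) = cdot ζ W + c * cdot ζ v := by
  unfold cdot
  rw [Finset.mul_sum, ← Finset.sum_add_distrib]
  refine Finset.sum_congr rfl fun j _ => ?_
  simp only [PiLp.add_apply, PiLp.smul_apply, smul_eq_mul]
  ring

theorem cdot_comm' {m : ℕ} (a b : EuclideanSpace ℂ (Fin m)) : cdot a b = cdot b a := by
  unfold cdot
  exact Finset.sum_congr rfl fun j _ => mul_comm _ _

/-- Let `Z, z′ ∈ ℂ^m`, `v ∈ ℝ^m ⊆ ℂ^m` nonzero, `ζ ∈ ℂ^m`, `η² = ⟨ζ⟩²`, `κ′, c♯ > 0`.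
If `Re[iζ·(Z−z′) − η⟨Z−z′⟩²] ≤ −κ′‖ζ‖‖Z−z′‖²`, `Re(ζ)·v ≥ c♯‖v‖‖ζ‖`,
`‖v‖ ≤ κ′c♯/4` and `‖v‖ ≤ c♯/2`, then
`Re[iζ·(Z+iv−z′) − η⟨Z+iv−z′⟩²] ≤ −(c♯/4)‖v‖‖ζ‖`. -/
theorem stmt16 (m : ℕ) (Z z' v ζ : EuclideanSpace ℂ (Fin m))
    (hv : ∀ j, (v j).im = 0) (hv0 : v ≠ 0)
    (η : ℂ) (hη : η ^ 2 = cdot ζ ζ) (κ' cs : ℝ) (hκ' : 0 < κ') (hcs : 0 < cs)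
    (h1 : (Complex.I * cdot ζ (Z - z') - η * cdot (Z - z') (Z - z')).re
        ≤ -κ' * ‖ζ‖ * ‖Z - z'‖ ^ 2)
    (h2 : cs * ‖v‖ * ‖ζ‖ ≤ ∑ j, (ζ j).re * (v j).re)
    (h3 : ‖v‖ ≤ κ' * cs / 4) (h4 : ‖v‖ ≤ cs / 2) :
    (Complex.I * cdot ζ (Z + Complex.I • v - z') -
        η * cdot (Z + Complex.I • v - z') (Z + Complex.I • v - z')).re
      ≤ -(cs / 4) * ‖v‖ * ‖ζ‖ := by
  have hW : Z + Complex.I • v - z' = (Z - z') + Complex.I • v := by abel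
  rw [hW]
  generalize Z - z' = W at h1 ⊢
  have hηN : ‖η‖ ≤ ‖ζ‖ := by
    have h := norm_cdot_le ζ ζ
    rw [← hη, norm_pow] at h
    exact abs_le_of_sq_le_sq' (by nlinarith) (norm_nonneg _) |>.2
  have hre : (cdot ζ v).re = ∑ j, (ζ j).re * (v j).re := by
    unfold cdot
    rw [Complex.re_sum]
    refine Finset.sum_congr rfl fun j _ => ?_
    rw [Complex.mul_re, hv j]; ring
  have hq : cdot (W + Complex.I • v) (W + Complex.I • v)
      = cdot W W + 2 * Complex.I * cdot W v - cdot v v := by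
    rw [cdot_shift, cdot_comm' _ W, cdot_comm' _ v, cdot_shift, cdot_shift, cdot_comm' v W]
    linear_combination (cdot v v) * Complex.I_sq
  have key : Complex.I * cdot ζ (W + Complex.I • v) -
        η * cdot (W + Complex.I • v) (W + Complex.I • v)
      = (Complex.I * cdot ζ W - η * cdot W W) - cdot ζ v
        - (η * (2 * Complex.I * cdot W v) - η * cdot v v) := by
    rw [hq, cdot_shift]
    linear_combination (cdot ζ v) * Complex.I_sq
  have e1 : ‖η * (2 * Complex.I * cdot W v)‖ ≤ ‖ζ‖ * (2 * (‖W‖ * ‖v‖)) := by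
    rw [norm_mul, norm_mul, norm_mul, Complex.norm_I]
    have := norm_cdot_le W v
    simp only [Complex.norm_ofNat, mul_one]
    gcongr
  have e2 : ‖η * cdot v v‖ ≤ ‖ζ‖ * (‖v‖ * ‖v‖) := by
    rw [norm_mul]
    have := norm_cdot_le v v
    gcongr
  have e3 := (abs_le.1 ((Complex.abs_re_le_norm _).trans e1)).1
  have e4 := (abs_le.1 ((Complex.abs_re_le_norm _).trans e2)).2
  rw [key, Complex.sub_re, Complex.sub_re, Complex.sub_re (η * _), hre]
  have hN := norm_nonneg ζ
  have ht := norm_nonneg v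
  generalize ‖ζ‖ = N at *
  generalize ‖v‖ = t at *
  generalize ‖W‖ = w at *
  have f1 : -κ' * w ^ 2 + 2 * (w * t) ≤ t * (cs / 4) := by
    have g : κ' * (-κ' * w ^ 2 + 2 * (w * t)) ≤ κ' * (t * (cs / 4)) := by
      nlinarith [sq_nonneg (κ' * w - t), mul_le_mul_of_nonneg_left h3 ht]
    exact le_of_mul_le_mul_left g hκ'
  have f2 : t * t ≤ t * (cs / 2) := mul_le_mul_of_nonneg_left h4 ht
  have f3 := mul_le_mul_of_nonneg_left (add_le_add f1 f2) hN
  linarith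
end

section
/- Let 𝓜 be a regular sequence, Ω ⊆ ℝ^N an open neighborhood of 0, and for 1 ≤ j ≤ n let L_j = ∂/∂r_j + Σ_{ℓ=1}^N a_{jℓ}(x) ∂/∂x_ℓ be vector fields on Ω × ℝ^n with a_{jℓ} ∈ C¹(Ω,ℂ). Suppose that for each 1 ≤ ℓ ≤ N there exist Z_ℓ ∈ C¹(Ω × ℝ^n, ℂ) and constants Q, δ > 0 with Z_ℓ(x,0) = x_ℓ and |L_j Z_ℓ(x,r)| ≤ Q^{k+1} m_k ‖r‖^k for all x ∈ Ω, 0 < ‖r‖ < δ, k ∈ ℕ, 1 ≤ j ≤ n. Let ξ_0 ∈ ℝ^N ∖ {0} and j_0 ∈ {1,…,n} with Σ_ℓ Im(a_{j_0 ℓ}(0))·ξ_{0,ℓ} < 0, and let Ψ ∈ C¹(Ω × ℝ^n, ℂ) satisfy |L_{j_0} Ψ(x,r)| ≤ Q^{k+1} m_k ‖r‖^k for x ∈ Ω, 0 < ‖r‖ < δ, k ∈ ℕ. Then there exist an open cone Γ ⊆ ℝ^N ∖ {0} with ξ_0 ∈ Γ, open neighborhoods V ⋐ U ⋐ Ω of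 0, a cutoff χ ∈ C_c^∞(Ω) with χ = 1 on U, and A > 0 such that |ℱ[χ·Ψ_0](x,ξ)| ≤ A^{k+1} M_k / ‖ξ‖^k for all (x,ξ) ∈ V × Γ and all k ∈ ℕ, where Ψ_0(x) := Ψ(x,0). -/
open scoped BigOperators

/-- The Euclidean norm on `ℝ^N`. -/
noncomputable def eNormR (N : ℕ) (x : Fin N → ℝ) : ℝ := Real.sqrt (∑ i, (x i) ^ 2)

/-- The F.B.I. transform of a (compactly supported, continuous) function `g : ℝ^N → ℂ`:
`ℱ[g](x,ξ) = ∫ e^{i(x−y)·ξ − ‖ξ‖‖x−y‖²} g(y) dy`. -/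
noncomputable def FBIT (N : ℕ) (g : (Fin N → ℝ) → ℂ) (x ξ : Fin N → ℝ) : ℂ :=
  ∫ y : Fin N → ℝ,
    Complex.exp (Complex.I * ((∑ i, (x i - y i) * ξ i : ℝ) : ℂ) -
      ((eNormR N ξ * (eNormR N (x - y)) ^ 2 : ℝ) : ℂ)) * g y

/-- The vector field `L_j = ∂/∂r_j + ∑_ℓ a_{jℓ}(x) ∂/∂x_ℓ` applied to
`H : ℝ^N × ℝ^n → ℂ`. -/
noncomputable def Lop {N n : ℕ} (a : Fin n → Fin N → (Fin N → ℝ) → ℂ) (j : Fin n)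
    (H : (Fin N → ℝ) → (Fin n → ℝ) → ℂ) (x : Fin N → ℝ) (r : Fin n → ℝ) : ℂ :=
  fderiv ℝ (fun r' => H x r') r (Pi.single j (1 : ℝ)) +
    ∑ l, a j l x * fderiv ℝ (fun x' => H x' r) x (Pi.single l (1 : ℝ))


section Helpers
open MeasureTheory Set


/-- matrix with first row `v` and other rows `w` -/
def dmat {N : ℕ} (v : Fin (N+1) → ℂ) (w : Fin N → Fin (N+1) → ℂ) :
    Matrix (Fin (N+1)) (Fin (N+1)) ℂ := Matrix.of (Fin.cons v w)

/-- cofactors along the first row -/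
noncomputable def cof {N : ℕ} (w : Fin N → Fin (N+1) → ℂ) (j : Fin (N+1)) : ℂ :=
  ∑ σ : Equiv.Perm (Fin (N+1)), if σ 0 = j then
    ((Equiv.Perm.sign σ : ℤ) : ℂ) * ∏ i : Fin N, w i (σ i.succ) else 0

theorem det_dmat {N : ℕ} (v : Fin (N+1) → ℂ) (w : Fin N → Fin (N+1) → ℂ) :
    (dmat v w).det = ∑ j, v j * cof w j := by
  rw [← Matrix.det_transpose, Matrix.det_apply']
  simp only [cof, Finset.mul_sum]
  rw [Finset.sum_comm]
  refine Finset.sum_congr rfl fun σ _ => ?_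
  rw [Fin.prod_univ_succ]
  simp [dmat, Matrix.transpose_apply]
  ring

theorem cof_zero {N : ℕ} (w : Fin N → Fin (N+1) → ℂ) :
    cof w 0 = (Matrix.of fun i k => w i (Fin.succ k)).det := by
  have h := det_dmat (Pi.single 0 1) w
  rw [Matrix.det_succ_row_zero] at h
  rw [Finset.sum_eq_single 0, Finset.sum_eq_single 0] at h
  · simp [dmat] at h
    rw [← h]
    congr 1
  · intro b _ hb
    simp [Pi.single_eq_of_ne hb]
  · simp
  · intro b _ hb
    simp [dmat, Pi.single_eq_of_ne hb]
  · simp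

theorem continuous_cof {N : ℕ} (j : Fin (N+1)) :
    Continuous fun w : Fin N → Fin (N+1) → ℂ => cof w j := by
  unfold cof
  refine continuous_finsetSum _ fun σ _ => ?_
  split_ifs
  · fun_prop
  · fun_prop

theorem continuous_det_dmat {N : ℕ} :
    Continuous fun q : (Fin (N+1) → ℂ) × (Fin N → Fin (N+1) → ℂ) => (dmat q.1 q.2).det := by
  simp only [det_dmat]
  refine continuous_finsetSum _ fun j _ => ?_
  exact ((continuous_apply j).comp continuous_fst).mul ((continuous_cof j).comp continuous_snd)

/-- gradient of a function -/
noncomputable def grd {N : ℕ} (f : (Fin (N+1) → ℝ) → ℂ) (p : Fin (N+1) → ℝ) (k : Fin (N+1)) : ℂ :=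
  fderiv ℝ f p (Pi.single k 1)

theorem piola_alg {N : ℕ} (w : Fin N → Fin (N+1) → ℂ) (h : Fin N → Fin (N+1) → Fin (N+1) → ℂ)
    (hs : ∀ i j k, h i j k = h i k j) :
    ∑ j : Fin (N+1), ∑ σ : Equiv.Perm (Fin (N+1)), (if σ 0 = j then
    ((Equiv.Perm.sign σ : ℤ) : ℂ) * ∑ i : Fin N, (∏ l ∈ Finset.univ.erase i, w l (σ l.succ)) *
      h i j (σ i.succ) else 0) = 0 := by
  rw [Finset.sum_comm]
  simp only [Finset.sum_ite_eq, Finset.mem_univ, if_true, Finset.mul_sum]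
  rw [Finset.sum_comm]
  refine Finset.sum_eq_zero fun i _ => ?_
  set F : Equiv.Perm (Fin (N+1)) → ℂ := fun σ => ((Equiv.Perm.sign σ : ℤ) : ℂ) *
    ((∏ l ∈ Finset.univ.erase i, w l (σ l.succ)) * h i (σ 0) (σ i.succ)) with hF
  change ∑ σ, F σ = 0
  have key : ∑ σ, F (σ * Equiv.swap 0 i.succ) = ∑ σ, F σ :=
    Equiv.sum_comp (Equiv.mulRight (Equiv.swap 0 i.succ)) F
  have neg : ∀ σ, F (σ * Equiv.swap 0 i.succ) = - F σ := by
    intro σ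
    simp only [hF]
    have hprod : (∏ l ∈ Finset.univ.erase i, w l ((σ * Equiv.swap 0 i.succ) l.succ)) =
        ∏ l ∈ Finset.univ.erase i, w l (σ l.succ) := by
      refine Finset.prod_congr rfl fun l hl => ?_
      have hl' : l ≠ i := Finset.ne_of_mem_erase hl
      rw [Equiv.Perm.mul_apply, Equiv.swap_apply_of_ne_of_ne (Fin.succ_ne_zero l)
        (fun hh => hl' (Fin.succ_injective _ hh))]
    rw [hprod, Equiv.Perm.sign_mul, Equiv.Perm.sign_swap (Fin.succ_ne_zero i).symm]
    simp only [Equiv.Perm.mul_apply, Equiv.swap_apply_left, Equiv.swap_apply_right]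
    rw [hs i (σ i.succ) (σ 0)]
    push_cast
    ring
  simp only [neg, Finset.sum_neg_distrib] at key
  have : (2:ℂ) * ∑ σ, F σ = 0 := by linear_combination -key
  simpa using this

theorem div_smooth {N : ℕ} (f : (Fin (N+1) → ℝ) → ℂ) (hf : ContDiff ℝ 1 f)
    (Z : Fin N → (Fin (N+1) → ℝ) → ℂ) (hZ : ∀ i, ContDiff ℝ 2 (Z i))
    (a b : Fin (N+1) → ℝ) (hab : a ≤ b)
    (hfa : ∀ p, ∀ i : Fin N, p i.succ = a i.succ → f p = 0)
    (hfb : ∀ p, ∀ i : Fin N, p i.succ = b i.succ → f p = 0) :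
    ∫ p in Icc a b, (dmat (grd f p) (fun i => grd (Z i) p)).det =
      (∫ y in Icc (fun i => a (Fin.succ i)) (fun i => b (Fin.succ i)),
        f (Fin.cons (b 0) y) * cof (fun i => grd (Z i) (Fin.cons (b 0) y)) 0) -
      ∫ y in Icc (fun i => a (Fin.succ i)) (fun i => b (Fin.succ i)),
        f (Fin.cons (a 0) y) * cof (fun i => grd (Z i) (Fin.cons (a 0) y)) 0 := by
  classical
  have hgd : ∀ i k, ContDiff ℝ 1 (fun p => grd (Z i) p k) := by
    intro i k
    unfold grd
    exact ((hZ i).fderiv_right (m := 1) (by norm_num)).clm_apply contDiff_const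
  -- derivative of the cofactor
  set C' : Fin (N+1) → (Fin (N+1) → ℝ) → (Fin (N+1) → ℝ) →L[ℝ] ℂ := fun j p =>
    ∑ σ : Equiv.Perm (Fin (N+1)), if σ 0 = j then
    ((Equiv.Perm.sign σ : ℤ) : ℂ) • ∑ i : Fin N, (∏ l ∈ Finset.univ.erase i, grd (Z l) p (σ l.succ)) •
      fderiv ℝ (fun p => grd (Z i) p (σ i.succ)) p else 0 with hC'
  have hcof : ∀ j p, HasFDerivAt (fun p => cof (fun i => grd (Z i) p) j) (C' j p) p := by
    intro j p
    unfold cof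
    refine HasFDerivAt.fun_sum fun σ _ => ?_
    split_ifs
    · refine HasFDerivAt.const_mul ?_ _
      refine HasFDerivAt.finsetProd fun i _ => ?_
      exact ((hgd i _).differentiable one_ne_zero p).hasFDerivAt
    · exact hasFDerivAt_const _ _
  have hpiola : ∀ p, ∑ j, C' j p (Pi.single j 1) = 0 := by
    intro p
    rw [← piola_alg (fun i k => grd (Z i) p k)
      (fun i j k => fderiv ℝ (fun p => grd (Z i) p k) p (Pi.single j 1))]
    · refine Finset.sum_congr rfl fun j _ => ?_
      rw [hC']
      simp only [sum_apply]
      refine Finset.sum_congr rfl fun σ _ => ?_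
      split_ifs
      · simp
      · simp
    · intro i j k
      have h1 : ∀ k j, fderiv ℝ (fun p => grd (Z i) p k) p (Pi.single j 1) =
          fderiv ℝ (fderiv ℝ (Z i)) p (Pi.single j 1) (Pi.single k 1) := by
        intro k j
        have hd : DifferentiableAt ℝ (fderiv ℝ (Z i)) p :=
          ((hZ i).fderiv_right (m := 1) (by norm_num)).differentiable one_ne_zero p
        unfold grd
        rw [fderiv_clm_apply hd (differentiableAt_const _)]
        simp
      rw [h1, h1]
      have hsym : IsSymmSndFDerivAt ℝ (Z i) p :=
        (hZ i).contDiffAt.isSymmSndFDerivAt (by simp)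
      exact hsym _ _
  have hcofc : ∀ j, Continuous fun p => cof (fun i => grd (Z i) p) j := fun j =>
    (continuous_cof j).comp (continuous_pi fun i => continuous_pi fun k => (hgd i k).continuous)
  set F : Fin (N+1) → (Fin (N+1) → ℝ) → ℂ := fun j p => f p * cof (fun i => grd (Z i) p) j with hF
  set F' : Fin (N+1) → (Fin (N+1) → ℝ) → (Fin (N+1) → ℝ) →L[ℝ] ℂ := fun j p =>
    f p • C' j p + cof (fun i => grd (Z i) p) j • fderiv ℝ f p with hF'
  have hFd : ∀ j p, HasFDerivAt (F j) (F' j p) p := fun j p =>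
    ((hf.differentiable one_ne_zero p).hasFDerivAt).mul (hcof j p)
  have hdiv : ∀ p, ∑ j, F' j p (Pi.single j 1) = (dmat (grd f p) (fun i => grd (Z i) p)).det := by
    intro p
    rw [det_dmat]
    simp only [hF', add_apply, smul_apply,
      Finset.sum_add_distrib, smul_eq_mul, ← Finset.mul_sum, hpiola p, mul_zero, zero_add, grd]
    exact Finset.sum_congr rfl fun j _ => mul_comm _ _
  have hdetc : Continuous fun p => (dmat (grd f p) (fun i => grd (Z i) p)).det := by
    refine continuous_det_dmat.comp (Continuous.prodMk ?_ ?_)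
    · refine continuous_pi fun k => ?_
      exact (hf.continuous_fderiv one_ne_zero).clm_apply continuous_const
    · exact (continuous_pi fun i => continuous_pi fun k => (hgd i k).continuous)
  have main := integral_divergence_of_hasFDerivAt_off_countable' a b hab F F' ∅ countable_empty
    (fun j => (hf.continuous.mul (hcofc j)).continuousOn) (fun p _ j => hFd j p)
    (by simp only [hdiv]; exact hdetc.continuousOn.integrableOn_compact isCompact_Icc)
  simp only [hdiv] at main
  rw [main, Fin.sum_univ_succ]
  rw [Finset.sum_eq_zero, add_zero]
  · simp only [Fin.insertNth_zero', hF]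
    rfl
  · intro i _
    have e1 : ∀ y, F i.succ (Fin.insertNth i.succ (b i.succ) y) = 0 := fun y => by
      simp only [hF]
      rw [hfb _ i (by simp), zero_mul]
    have e2 : ∀ y, F i.succ (Fin.insertNth i.succ (a i.succ) y) = 0 := fun y => by
      simp only [hF]
      rw [hfa _ i (by simp), zero_mul]
    simp only [e1, e2, integral_zero, sub_self]


theorem dct_aux {X E : Type*} [TopologicalSpace X] [MeasurableSpace X] [BorelSpace X]
    [SecondCountableTopologyEither X ℂ]
    [NormedAddCommGroup E] [ProperSpace E] (μ : Measure X) (S : Set X) (hS : MeasurableSet S)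
    (hfin : μ S ≠ ⊤) (H : E → ℂ) (hH : Continuous H) (u : ℕ → X → E) (v : X → E)
    (hu : ∀ n, Continuous (u n)) (B : ℝ) (hB : ∀ n, ∀ x ∈ S, ‖u n x‖ ≤ B)
    (hlim : ∀ x, Filter.Tendsto (fun n => u n x) Filter.atTop (nhds (v x))) :
    Filter.Tendsto (fun n => ∫ x in S, H (u n x) ∂μ) Filter.atTop (nhds (∫ x in S, H (v x) ∂μ)) := by
  obtain ⟨C, hC⟩ := (isCompact_closedBall (0:E) B).exists_bound_of_continuousOn hH.continuousOn
  refine tendsto_integral_of_dominated_convergence (fun _ => C) ?_ ?_ ?_ ?_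
  · intro n
    exact (hH.comp (hu n)).aestronglyMeasurable
  · exact integrableOn_const hfin
  · intro n
    filter_upwards [ae_restrict_mem hS] with x hx
    exact hC _ (by simpa using hB n x hx)
  · exact Filter.Eventually.of_forall fun x => (hH.tendsto _).comp (hlim x)

theorem mollify {N : ℕ} (Z : (Fin (N+1) → ℝ) → ℂ) (hZ : ContDiff ℝ 1 Z) (hc : HasCompactSupport Z) :
    ∃ W : ℕ → (Fin (N+1) → ℝ) → ℂ, (∀ n, ContDiff ℝ 2 (W n)) ∧
      (∃ B, ∀ n p k, ‖grd (W n) p k‖ ≤ B) ∧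
      ∀ p k, Filter.Tendsto (fun n => grd (W n) p k) Filter.atTop (nhds (grd Z p k)) := by
  let φ : ℕ → ContDiffBump (0 : Fin (N+1) → ℝ) := fun n =>
    ⟨1 / (n + 2 : ℝ), 1 / (n + 1 : ℝ), by positivity, by
      apply one_div_lt_one_div_of_lt <;> [positivity; linarith]⟩
  have hφ : Filter.Tendsto (fun n => (φ n).rOut) Filter.atTop (nhds 0) :=
    tendsto_one_div_add_atTop_nhds_zero_nat
  have hgc : ∀ k, Continuous fun p => grd Z p k := fun k => by
    unfold grd
    exact (hZ.continuous_fderiv one_ne_zero).clm_apply continuous_const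
  obtain ⟨B, hB⟩ := (hc.fderiv ℝ).exists_bound_of_continuous (hZ.continuous_fderiv one_ne_zero)
  have hB' : ∀ p k, ‖grd Z p k‖ ≤ B := by
    intro p k
    refine ((fderiv ℝ Z p).le_opNorm _).trans ?_
    have : ‖(Pi.single k 1 : Fin (N+1) → ℝ)‖ = 1 := by rw [Pi.norm_single]; simp
    rw [this, mul_one]
    exact hB p
  have hloc : ∀ n, LocallyIntegrable ((φ n).normed volume) volume :=
    fun n => (φ n).continuous_normed.locallyIntegrable
  have hgrd : ∀ n p k, grd (convolution ((φ n).normed volume) Z (ContinuousLinearMap.lsmul ℝ ℝ) volume) p k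
      = convolution ((φ n).normed volume) (fun a => grd Z a k) (ContinuousLinearMap.lsmul ℝ ℝ) volume p := by
    intro n p k
    unfold grd
    rw [(hc.hasFDerivAt_convolution_right (ContinuousLinearMap.lsmul ℝ ℝ) (hloc n) hZ p).fderiv]
    exact convolution_precompR_apply (ContinuousLinearMap.lsmul ℝ ℝ) (hloc n) (hc.fderiv ℝ)
      (hZ.continuous_fderiv one_ne_zero) _ _
  refine ⟨fun n => convolution ((φ n).normed volume) Z (ContinuousLinearMap.lsmul ℝ ℝ) volume,
    ?_, ⟨3 * B, ?_⟩, ?_⟩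
  · intro n
    exact (φ n).hasCompactSupport_normed.contDiff_convolution_left _ (φ n).contDiff_normed
      hZ.continuous.locallyIntegrable
  · intro n p k
    rw [hgrd]
    have h1 := (φ n).dist_normed_convolution_le (μ := volume) (x₀ := p) (ε := 2 * B)
      (g := fun a => grd Z a k) (hgc k).aestronglyMeasurable (fun x _ => by
        rw [dist_eq_norm]
        refine (norm_sub_le _ _).trans ?_
        linarith [hB' x k, hB' p k])
    rw [dist_eq_norm] at h1
    have h2 := norm_sub_norm_le
      (convolution ((φ n).normed volume) (fun a => grd Z a k) (ContinuousLinearMap.lsmul ℝ ℝ) volume p)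
      (grd Z p k)
    linarith [hB' p k]
  · intro p k
    simp only [hgrd]
    exact ContDiffBump.convolution_tendsto_right_of_continuous hφ (hgc k) p

theorem div_C1 {N : ℕ} (f : (Fin (N+1) → ℝ) → ℂ) (hf : ContDiff ℝ 1 f)
    (Z : Fin N → (Fin (N+1) → ℝ) → ℂ) (hZ : ∀ i, ContDiff ℝ 1 (Z i))
    (hZc : ∀ i, HasCompactSupport (Z i))
    (a b : Fin (N+1) → ℝ) (hab : a ≤ b)
    (hfa : ∀ p, ∀ i : Fin N, p i.succ = a i.succ → f p = 0)
    (hfb : ∀ p, ∀ i : Fin N, p i.succ = b i.succ → f p = 0) :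
    ∫ p in Icc a b, (dmat (grd f p) (fun i => grd (Z i) p)).det =
      (∫ y in Icc (fun i => a (Fin.succ i)) (fun i => b (Fin.succ i)),
        f (Fin.cons (b 0) y) * cof (fun i => grd (Z i) (Fin.cons (b 0) y)) 0) -
      ∫ y in Icc (fun i => a (Fin.succ i)) (fun i => b (Fin.succ i)),
        f (Fin.cons (a 0) y) * cof (fun i => grd (Z i) (Fin.cons (a 0) y)) 0 := by
  choose W hW hWB hWl using fun i => mollify (Z i) (hZ i) (hZc i)
  choose B hB using hWB
  have hgc : ∀ (g : (Fin (N+1) → ℝ) → ℂ), ContDiff ℝ 1 g → Continuous (grd g) := fun g hg => by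
    refine continuous_pi fun k => ?_
    exact (hg.continuous_fderiv one_ne_zero).clm_apply continuous_const
  set B0 := ∑ i, |B i| with hB0
  have hB0n : 0 ≤ B0 := Finset.sum_nonneg fun i _ => abs_nonneg _
  have hWn : ∀ n p, ‖fun i => grd (W i n) p‖ ≤ B0 := by
    intro n p
    refine (pi_norm_le_iff_of_nonneg hB0n).2 fun i => (pi_norm_le_iff_of_nonneg hB0n).2 fun k => ?_
    refine (hB i n p k).trans ((le_abs_self _).trans ?_)
    exact Finset.single_le_sum (f := fun i => |B i|) (fun i _ => abs_nonneg _) (Finset.mem_univ i)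
  have hWc : ∀ n, Continuous fun p => fun i => grd (W i n) p := fun n =>
    continuous_pi fun i => hgc _ ((hW i n).of_le (by norm_num))
  have hWlim : ∀ p, Filter.Tendsto (fun n => fun i => grd (W i n) p) Filter.atTop
      (nhds (fun i => grd (Z i) p)) := fun p =>
    tendsto_pi_nhds.2 fun i => tendsto_pi_nhds.2 fun k => hWl i p k
  -- bounds for f
  obtain ⟨Cf, hCf⟩ := (isCompact_Icc (a := a) (b := b)).exists_bound_of_continuousOn
    (hgc f hf).continuousOn
  have lhs : Filter.Tendsto (fun n => ∫ p in Icc a b, (dmat (grd f p) (fun i => grd (W i n) p)).det)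
      Filter.atTop (nhds (∫ p in Icc a b, (dmat (grd f p) (fun i => grd (Z i) p)).det)) := by
    refine dct_aux volume (Icc a b) measurableSet_Icc isCompact_Icc.measure_lt_top.ne
      (fun q : (Fin (N+1) → ℂ) × (Fin N → Fin (N+1) → ℂ) => (dmat q.1 q.2).det) continuous_det_dmat
      (fun n p => (grd f p, fun i => grd (W i n) p)) (fun p => (grd f p, fun i => grd (Z i) p))
      (fun n => (hgc f hf).prodMk (hWc n)) (max Cf B0) ?_ ?_
    · intro n p hp
      exact max_le_max (hCf p hp) (hWn n p)
    · intro p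
      exact tendsto_const_nhds.prodMk_nhds (hWlim p)
  have face : ∀ c : ℝ, Filter.Tendsto (fun n =>
      ∫ y in Icc (fun i => a (Fin.succ i)) (fun i => b (Fin.succ i)),
        f (Fin.cons c y) * cof (fun i => grd (W i n) (Fin.cons c y)) 0) Filter.atTop
      (nhds (∫ y in Icc (fun i => a (Fin.succ i)) (fun i => b (Fin.succ i)),
        f (Fin.cons c y) * cof (fun i => grd (Z i) (Fin.cons c y)) 0)) := by
    intro c
    have hcons : Continuous fun y : Fin N → ℝ => (Fin.cons c y : Fin (N+1) → ℝ) := by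
      refine continuous_pi fun k => ?_
      refine Fin.cases ?_ (fun k => ?_) k
      · simpa using continuous_const
      · simpa using continuous_apply k
    obtain ⟨Cg, hCg⟩ := (isCompact_Icc (a := fun i => a (Fin.succ i))
      (b := fun i => b (Fin.succ i))).exists_bound_of_continuousOn
      (hf.continuous.comp hcons).continuousOn
    refine dct_aux volume (Icc (fun i => a (Fin.succ i)) (fun i => b (Fin.succ i)))
      measurableSet_Icc isCompact_Icc.measure_lt_top.ne
      (fun q : ℂ × (Fin N → Fin (N+1) → ℂ) => q.1 * cof q.2 0)
      (continuous_fst.mul ((continuous_cof 0).comp continuous_snd))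
      (fun n y => (f (Fin.cons c y), fun i => grd (W i n) (Fin.cons c y)))
      (fun y => (f (Fin.cons c y), fun i => grd (Z i) (Fin.cons c y)))
      (fun n => (hf.continuous.comp hcons).prodMk ((hWc n).comp hcons)) (max Cg B0) ?_ ?_
    · intro n p hp
      exact max_le_max (hCg p hp) (hWn n _)
    · intro p
      exact tendsto_const_nhds.prodMk_nhds (hWlim _)
  refine tendsto_nhds_unique lhs ?_
  have := (face (b 0)).sub (face (a 0))
  refine this.congr fun n => ?_
  exact (div_smooth f hf (fun i => W i n) (fun i => hW i n) a b hab hfa hfb).symm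


theorem continuous_grd {N : ℕ} (g : (Fin (N+1) → ℝ) → ℂ) (hg : ContDiff ℝ 1 g) :
    Continuous (grd g) := by
  refine continuous_pi fun k => ?_
  exact (hg.continuous_fderiv one_ne_zero).clm_apply continuous_const

theorem det_dmat_row {N : ℕ} (v : Fin (N+1) → ℂ) (w : Fin N → Fin (N+1) → ℂ) (α : ℂ)
    (c : Fin N → ℂ) :
    (dmat (fun k => α * v k + ∑ l, c l * w l k) w).det = α * (dmat v w).det := by
  have h := Matrix.det_updateRow_sum (dmat v w) 0 (Fin.cons α c)
  simp only [Fin.cons_zero, smul_eq_mul] at h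
  rw [← h]
  congr 1
  ext i k
  refine Fin.cases ?_ (fun i => ?_) i
  · simp [dmat, Fin.sum_univ_succ]
  · simp [dmat]

theorem det_dmat_bound {N : ℕ} (v : Fin (N+1) → ℂ) (w : Fin N → Fin (N+1) → ℂ)
    (a : Fin N → ℂ) (B d : ℝ) (hv : ∀ k, ‖v k‖ ≤ B) (hw : ∀ i k, ‖w i k‖ ≤ B)
    (hvd : ‖v 0 + ∑ j, a j * v (Fin.succ j)‖ ≤ d)
    (hwd : ∀ i, ‖w i 0 + ∑ j, a j * w i (Fin.succ j)‖ ≤ d) :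
    ‖(dmat v w).det‖ ≤ (N + 1) * (N.factorial * B ^ N) * d := by
  have h := Matrix.det_updateCol_sum (dmat v w) 0 (Fin.cons 1 a)
  simp only [Fin.cons_zero, one_smul] at h
  rw [← h, Matrix.det_succ_column_zero]
  have hB : 0 ≤ B := (norm_nonneg _).trans (hv 0)
  have hd : 0 ≤ d := (norm_nonneg _).trans hvd
  have hent : ∀ i k, ‖(dmat v w) i k‖ ≤ B := by
    intro i k
    refine Fin.cases ?_ (fun i => ?_) i
    · simpa [dmat] using hv k
    · simpa [dmat] using hw i k
  refine (norm_sum_le _ _).trans ?_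
  have : ∀ i ∈ (Finset.univ : Finset (Fin (N+1))), ‖(-1 : ℂ) ^ (i : ℕ) *
      ((dmat v w).updateCol 0 (fun k => ∑ i, (Fin.cons 1 a : Fin (N+1) → ℂ) i • dmat v w k i)) i 0 *
      (((dmat v w).updateCol 0 (fun k => ∑ i, (Fin.cons 1 a : Fin (N+1) → ℂ) i • dmat v w k i)).submatrix
        i.succAbove Fin.succ).det‖ ≤ (N.factorial * B ^ N) * d := by
    intro i _
    rw [norm_mul, norm_mul, norm_pow, norm_neg, norm_one, one_pow, one_mul, mul_comm]
    refine mul_le_mul ?_ ?_ (norm_nonneg _) (by positivity)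
    · have := Matrix.det_le (abv := NormedField.toAbsoluteValue ℂ) (x := B)
        (A := (((dmat v w).updateCol 0 (fun k => ∑ i, (Fin.cons 1 a : Fin (N+1) → ℂ) i • dmat v w k i)).submatrix
        i.succAbove Fin.succ)) (fun i' k => by
          simp only [Matrix.submatrix_apply]
          rw [Matrix.updateCol_ne (Fin.succ_ne_zero k)]
          exact hent _ _)
      rw [nsmul_eq_mul, Fintype.card_fin] at this
      exact this
    · rw [Matrix.updateCol_self]
      refine Fin.cases ?_ (fun i => ?_) i
      · simpa [dmat, Fin.sum_univ_succ] using hvd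
      · simpa [dmat, Fin.sum_univ_succ] using hwd i
  refine (Finset.sum_le_card_nsmul _ _ _ this).trans ?_
  rw [nsmul_eq_mul]
  simp
  apply le_of_eq; ring

theorem exp_decay (u s t : ℝ) (hu : 0 < u) (hs : 0 < s) (ht : 0 ≤ t) (k : ℕ) :
    t ^ k * Real.exp (-(u * t * s)) ≤ k.factorial * (1 / u) ^ k / s ^ k := by
  have h := Real.pow_div_factorial_le_exp (u * t * s) (by positivity) k
  rw [Real.exp_neg]
  have hk : (0:ℝ) < k.factorial := by positivity
  rw [div_le_iff₀ hk] at h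
  have he := Real.exp_pos (u * t * s)
  rw [mul_pow, mul_pow] at h
  rw [← div_eq_mul_inv, div_le_div_iff₀ he (by positivity), one_div, inv_pow]
  have hup : 0 < u ^ k := by positivity
  calc t ^ k * s ^ k = (u ^ k)⁻¹ * (u ^ k * t ^ k * s ^ k) := by field_simp
    _ ≤ (u ^ k)⁻¹ * (Real.exp (u * t * s) * k.factorial) := by gcongr
    _ = _ := by ring

theorem exp_decay' (u s : ℝ) (hu : 0 < u) (hs : 0 < s) (k : ℕ) :
    Real.exp (-(u * s)) ≤ k.factorial * (1 / u) ^ k / s ^ k := by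
  simpa using exp_decay u s 1 hu hs zero_le_one k

theorem DCm_ge_one (M : ℕ → ℝ) (h : DCRegular M) : ∀ k, 1 ≤ DCm M k := by
  obtain ⟨h0, h1, h2, h3, -, -⟩ := h
  have : ∀ k, 1 ≤ DCm M k ∧ DCm M k ≤ DCm M (k+1) := by
    intro k
    induction k with
    | zero => rw [h1, h2]; simp
    | succ k ih =>
      obtain ⟨i1, i2⟩ := ih
      refine ⟨i1.trans i2, ?_⟩
      have := h3 (k+1) (by omega)
      simp only [Nat.add_sub_cancel] at this
      have hp : 0 < DCm M k := by linarith
      by_contra hcon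
      push Not at hcon
      have hq : 0 < DCm M (k+1) := by linarith
      nlinarith
  exact fun k => (this k).1

theorem eNormR_sq {N : ℕ} (x : Fin N → ℝ) : eNormR N x ^ 2 = ∑ i, x i ^ 2 := by
  unfold eNormR
  exact Real.sq_sqrt (Finset.sum_nonneg fun i _ => sq_nonneg _)

theorem eNormR_nonneg {N : ℕ} (x : Fin N → ℝ) : 0 ≤ eNormR N x := Real.sqrt_nonneg _

theorem abs_le_eNormR {N : ℕ} (x : Fin N → ℝ) (i : Fin N) : |x i| ≤ eNormR N x := by
  refine abs_le_of_sq_le_sq ?_ (eNormR_nonneg x)|> fun h => h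
  rw [eNormR_sq]
  exact Finset.single_le_sum (f := fun i => x i ^ 2) (fun i _ => sq_nonneg _) (Finset.mem_univ i)

theorem eNormR_pos {N : ℕ} (x : Fin N → ℝ) (hx : x ≠ 0) : 0 < eNormR N x := by
  obtain ⟨i, hi⟩ := Function.ne_iff.1 hx
  exact (abs_pos.2 hi).trans_le (abs_le_eNormR x i)

theorem eNormR_smul {N : ℕ} (x : Fin N → ℝ) (t : ℝ) (ht : 0 < t) :
    eNormR N (t • x) = t * eNormR N x := by
  unfold eNormR
  simp only [Pi.smul_apply, smul_eq_mul, mul_pow, ← Finset.mul_sum]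
  rw [Real.sqrt_mul (by positivity), Real.sqrt_sq ht.le]

theorem continuous_eNormR {N : ℕ} : Continuous (eNormR N) := by
  unfold eNormR
  fun_prop

/-- the phase -/
noncomputable def phs {N : ℕ} (x ξ : Fin N → ℝ) (z : Fin N → ℂ) : ℂ :=
  Complex.I * (∑ i, ((x i : ℂ) - z i) * (ξ i : ℂ)) - (eNormR N ξ : ℂ) * ∑ i, ((x i : ℂ) - z i) ^ 2

theorem phs_re {N : ℕ} (x ξ : Fin N → ℝ) (z : Fin N → ℂ) :
    (phs x ξ z).re = (∑ i, (z i).im * ξ i) + eNormR N ξ * (∑ i, (z i).im ^ 2) -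
      eNormR N ξ * (∑ i, (x i - (z i).re) ^ 2) := by
  unfold phs
  simp only [Complex.sub_re, Complex.mul_re, Complex.I_re, Complex.I_im, Complex.re_sum,
    Complex.im_sum, Complex.ofReal_re, Complex.ofReal_im, Complex.mul_im, pow_two, Complex.sub_im]
  simp only [Finset.mul_sum, zero_mul, one_mul, mul_zero, zero_sub, sub_zero, zero_add, add_zero]
  simp only [← Finset.sum_sub_distrib, ← Finset.sum_add_distrib, ← Finset.sum_neg_distrib]
  refine Finset.sum_congr rfl fun i _ => ?_
  ring

theorem grd_exp {N : ℕ} (x ξ : Fin N → ℝ) (Z : Fin N → (Fin (N+1) → ℝ) → ℂ)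
    (hZ : ∀ i, ContDiff ℝ 1 (Z i)) (g : (Fin (N+1) → ℝ) → ℂ) (hg : ContDiff ℝ 1 g)
    (p : Fin (N+1) → ℝ) :
    (dmat (grd (fun p => Complex.exp (phs x ξ (fun i => Z i p)) * g p) p) (fun i => grd (Z i) p)).det
      = Complex.exp (phs x ξ (fun i => Z i p)) * (dmat (grd g p) (fun i => grd (Z i) p)).det := by
  rw [← det_dmat_row _ _ _ (fun l => Complex.exp (phs x ξ (fun i => Z i p)) * g p *
    (- (Complex.I * ξ l) + 2 * eNormR N ξ * (x l - Z l p)))]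
  congr 2
  ext k
  have hd : ∀ i, HasFDerivAt (Z i) (fderiv ℝ (Z i) p) p := fun i =>
    ((hZ i).differentiable one_ne_zero p).hasFDerivAt
  have hgd : HasFDerivAt g (fderiv ℝ g p) p := (hg.differentiable one_ne_zero p).hasFDerivAt
  have hE := ((HasFDerivAt.fun_sum (u := Finset.univ) fun i _ =>
    ((hd i).const_sub (x i : ℂ)).mul_const (ξ i : ℂ)).const_mul Complex.I).sub
    ((HasFDerivAt.fun_sum (u := Finset.univ) fun i _ =>
      ((hd i).const_sub (x i : ℂ)).pow 2).const_mul (eNormR N ξ : ℂ))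
  have hF := (hE.cexp).mul hgd
  have := congrArg (fun L => L (Pi.single k (1:ℝ))) hF.fderiv
  refine Eq.trans this ?_
  simp only [phs, grd, add_apply, smul_apply, sub_apply, neg_apply, sum_apply, Pi.sub_apply,
    smul_eq_mul, nsmul_eq_mul, Nat.add_one_sub_one, pow_one, Nat.cast_ofNat]
  congr 1
  simp only [Finset.mul_sum, ← Finset.sum_sub_distrib]
  refine Finset.sum_congr rfl fun i _ => ?_
  ring

theorem contDiff_phs {N : ℕ} (x ξ : Fin N → ℝ) (Z : Fin N → (Fin (N+1) → ℝ) → ℂ)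
    (hZ : ∀ i, ContDiff ℝ 1 (Z i)) (g : (Fin (N+1) → ℝ) → ℂ) (hg : ContDiff ℝ 1 g) :
    ContDiff ℝ 1 (fun p => Complex.exp (phs x ξ (fun i => Z i p)) * g p) := by
  unfold phs
  refine ContDiff.mul (ContDiff.cexp (ContDiff.sub (contDiff_const.mul ?_) (contDiff_const.mul ?_))) hg
  · exact ContDiff.sum fun i _ => (contDiff_const.sub (hZ i)).mul contDiff_const
  · exact ContDiff.sum fun i _ => (contDiff_const.sub (hZ i)).pow 2


theorem hasDerivAt_cons {N : ℕ} (y : Fin N → ℝ) (t : ℝ) :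
    HasDerivAt (fun t : ℝ => (Fin.cons t y : Fin (N+1) → ℝ)) (Pi.single 0 1) t := by
  rw [hasDerivAt_pi]
  intro k
  refine Fin.cases ?_ (fun k => ?_) k
  · simpa using hasDerivAt_id' t
  · simpa [Pi.single_apply, Fin.succ_ne_zero] using hasDerivAt_const t (y k)

theorem continuous_cons_right {N : ℕ} (c : ℝ) :
    Continuous fun y : Fin N → ℝ => (Fin.cons c y : Fin (N+1) → ℝ) := by
  refine continuous_pi fun k => ?_
  refine Fin.cases ?_ (fun k => ?_) k
  · simpa using continuous_const
  · simpa using continuous_apply k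

theorem continuous_cons_left {N : ℕ} (y : Fin N → ℝ) :
    Continuous fun t : ℝ => (Fin.cons t y : Fin (N+1) → ℝ) :=
  continuous_iff_continuousAt.2 fun t => (hasDerivAt_cons y t).continuousAt

theorem hasDerivAt_comp_cons {N : ℕ} (Z : (Fin (N+1) → ℝ) → ℂ) (hZ : ContDiff ℝ 1 Z)
    (y : Fin N → ℝ) (t : ℝ) :
    HasDerivAt (fun t : ℝ => Z (Fin.cons t y)) (grd Z (Fin.cons t y) 0) t :=
  ((hZ.differentiable one_ne_zero _).hasFDerivAt).comp_hasDerivAt t (hasDerivAt_cons y t)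

theorem grd_zero_space {N : ℕ} (Z : (Fin (N+1) → ℝ) → ℂ) (hZ : ContDiff ℝ 1 Z) (l : Fin N) (R0 : ℝ)
    (h : ∀ y : Fin N → ℝ, ‖y‖ ≤ R0 → Z (Fin.cons 0 y) = (y l : ℂ)) (y : Fin N → ℝ) (hy : ‖y‖ < R0)
    (j : Fin N) : grd Z (Fin.cons 0 y) j.succ = if l = j then 1 else 0 := by
  have h1 : HasDerivAt (fun s : ℝ => Z (Fin.cons 0 y + s • Pi.single j.succ 1))
      (grd Z (Fin.cons 0 y) j.succ) 0 :=
    ((hZ.differentiable one_ne_zero (Fin.cons 0 y)).hasFDerivAt).hasLineDerivAt _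
  have hc : Continuous fun s : ℝ => y + s • (Pi.single j 1 : Fin N → ℝ) := by fun_prop
  have hev : ∀ᶠ s in nhds (0:ℝ), ‖y + s • (Pi.single j 1 : Fin N → ℝ)‖ < R0 := by
    have := (hc.norm).tendsto 0
    simp only [zero_smul, add_zero] at this
    exact this.eventually (gt_mem_nhds hy)
  have h2 : HasDerivAt (fun s : ℝ => ((y + s • (Pi.single j 1 : Fin N → ℝ)) l : ℂ))
      (if l = j then 1 else 0) 0 := by
    simp only [Pi.add_apply, Pi.smul_apply, smul_eq_mul, Complex.ofReal_add, Complex.ofReal_mul]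
    have := ((Complex.ofRealCLM.hasDerivAt (x := (0:ℝ))).mul_const
      (((Pi.single j 1 : Fin N → ℝ) l : ℝ) : ℂ)).const_add (y l : ℂ)
    refine HasDerivAt.congr_deriv this ?_
    by_cases hlj : l = j
    · subst hlj; simp
    · simp [hlj]
  refine h1.unique (h2.congr_of_eventuallyEq ?_)
  filter_upwards [hev] with s hs
  rw [← h _ hs.le]
  congr 1
  ext k
  refine Fin.cases ?_ (fun k => ?_) k
  · simp [Pi.single_apply, (Fin.succ_ne_zero j).symm]
  · simp [Pi.single_apply]

theorem L_ext {N : ℕ} (H : (Fin (N+1) → ℝ) → ℂ) (hH : ContDiff ℝ 1 H) (b : Fin N → ℂ)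
    (y : Fin N → ℝ) (R0 : ℝ) (hR0 : 0 < R0) (F : ℝ → ℝ) (hF : Continuous F)
    (h : ∀ t, t ≠ 0 → |t| ≤ R0 →
      ‖grd H (Fin.cons t y) 0 + ∑ j, b j * grd H (Fin.cons t y) (Fin.succ j)‖ ≤ F t) :
    ∀ t, |t| ≤ R0 →
      ‖grd H (Fin.cons t y) 0 + ∑ j, b j * grd H (Fin.cons t y) (Fin.succ j)‖ ≤ F t := by
  intro t ht
  by_cases ht0 : t = 0
  swap
  · exact h t ht0 ht
  subst ht0
  have hg : ∀ k, Continuous fun t : ℝ => grd H (Fin.cons t y) k := fun k =>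
    ((continuous_apply k).comp (continuous_grd H hH)).comp (continuous_cons_left y)
  have hc : Continuous fun t : ℝ =>
      ‖grd H (Fin.cons t y) 0 + ∑ j, b j * grd H (Fin.cons t y) (Fin.succ j)‖ :=
    ((hg 0).add (continuous_finsetSum _ fun j _ => continuous_const.mul (hg _))).norm
  refine le_of_tendsto_of_tendsto (hc.continuousAt.tendsto.mono_left nhdsWithin_le_nhds)
    (hF.continuousAt.tendsto.mono_left (nhdsWithin_le_nhds (s := {0}ᶜ))) ?_
  have h1 : ∀ᶠ s in nhdsWithin (0:ℝ) {0}ᶜ, |s| < R0 := by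
    refine Filter.Eventually.filter_mono nhdsWithin_le_nhds ?_
    have := (continuous_abs.tendsto (0:ℝ))
    rw [abs_zero] at this
    exact this.eventually (gt_mem_nhds hR0)
  filter_upwards [h1, self_mem_nhdsWithin] with s hs hs0
  exact h s hs0 hs.le

theorem im_bound {N : ℕ} (Z : Fin N → (Fin (N+1) → ℝ) → ℂ) (hZ : ∀ i, ContDiff ℝ 1 (Z i))
    (y : Fin N → ℝ) (h0 : ∀ l, (Z l (Fin.cons 0 y)).im = 0) (ω : Fin N → ℝ) (T κ : ℝ)
    (h : ∀ t, -T ≤ t → t ≤ 0 → κ ≤ ∑ l, (grd (Z l) (Fin.cons t y) 0).im * ω l) :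
    ∀ t, -T ≤ t → t ≤ 0 → ∑ l, (Z l (Fin.cons t y)).im * ω l ≤ κ * t := by
  intro t ht ht0
  have hd : ∀ t, HasDerivAt (fun t : ℝ => (∑ l, (Z l (Fin.cons t y)).im * ω l) - κ * t)
      ((∑ l, (grd (Z l) (Fin.cons t y) 0).im * ω l) - κ) t := by
    intro t
    refine HasDerivAt.sub (HasDerivAt.fun_sum fun l _ => HasDerivAt.mul_const ?_ _) ?_
    · exact Complex.imCLM.hasFDerivAt.comp_hasDerivAt t (hasDerivAt_comp_cons (Z l) (hZ l) y t)
    · simpa using (hasDerivAt_id t).const_mul κ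
  have hm := monotoneOn_of_deriv_nonneg (convex_Icc (-T) 0)
    (f := fun t : ℝ => (∑ l, (Z l (Fin.cons t y)).im * ω l) - κ * t)
    (fun t _ => (hd t).continuousAt.continuousWithinAt)
    (fun t _ => (hd t).differentiableAt.differentiableWithinAt)
    (fun t ht => by
      rw [interior_Icc] at ht
      rw [(hd t).deriv]
      linarith [h t ht.1.le ht.2.le])
  have := hm ⟨ht, ht0⟩ ⟨ht.trans ht0, le_refl _⟩ ht0
  simp only [h0, zero_mul, Finset.sum_const_zero, mul_zero, sub_zero] at this
  linarith

theorem norm_cons_lt {N : ℕ} (t : ℝ) (y : Fin N → ℝ) (ρ : ℝ) (hρ : 0 < ρ) (ht : |t| < ρ)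
    (hy : ‖y‖ < ρ) : ‖(Fin.cons t y : Fin (N+1) → ℝ)‖ < ρ := by
  rw [pi_norm_lt_iff hρ]
  intro k
  refine Fin.cases ?_ (fun k => ?_) k
  · simpa using ht
  · simpa using (norm_le_pi_norm y k).trans_lt hy

set_option maxHeartbeats 1000000 in
theorem geom {N : ℕ} (Z : Fin N → (Fin (N+1) → ℝ) → ℂ) (hZ : ∀ i, ContDiff ℝ 1 (Z i))
    (hZc : ∀ i, HasCompactSupport (Z i)) (R0 : ℝ) (hR0 : 0 < R0)
    (hZ0 : ∀ l, ∀ y : Fin N → ℝ, ‖y‖ ≤ R0 → Z l (Fin.cons 0 y) = (y l : ℂ))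
    (ξ0 : Fin N → ℝ) (hξ0 : ξ0 ≠ 0) (hchar : 0 < ∑ l, (grd (Z l) 0 0).im * ξ0 l) :
    ∃ Γ : Set (Fin N → ℝ), IsOpen Γ ∧ ξ0 ∈ Γ ∧
      (∀ w ∈ Γ, ∀ t : ℝ, 0 < t → t • w ∈ Γ) ∧ (∀ w ∈ Γ, w ≠ 0) ∧
    ∃ r T c : ℝ, 0 < r ∧ 4 * r ≤ R0 ∧ 0 < T ∧ T ≤ r ∧ 0 < c ∧
      ∀ x : Fin N → ℝ, ‖x‖ < r / 4 → ∀ ξ ∈ Γ, ∀ y : Fin N → ℝ, ‖y‖ ≤ 2 * r →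
        ∀ t, -T ≤ t → t ≤ 0 →
        (phs x ξ (fun i => Z i (Fin.cons t y))).re ≤ c * t * eNormR N ξ ∧
        (r ≤ ‖y‖ → (phs x ξ (fun i => Z i (Fin.cons t y))).re ≤ -(r ^ 2 / 4 * eNormR N ξ)) := by
  set β : Fin N → ℝ := fun l => (grd (Z l) 0 0).im with hβ
  set S := ∑ l, β l * ξ0 l with hS
  have hn0 := eNormR_pos ξ0 hξ0
  set c := S / (4 * eNormR N ξ0) with hc
  have hcpos : 0 < c := by positivity
  have hcS : 2 * c * eNormR N ξ0 = S / 2 := by rw [hc]; field_simp; norm_num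
  have hcontβ : Continuous fun w : Fin N → ℝ => ∑ l, β l * w l := by fun_prop
  refine ⟨{w | w ≠ 0 ∧ 2 * c * eNormR N w < ∑ l, β l * w l}, ?_, ?_, ?_, fun w hw => hw.1, ?_⟩
  · refine isOpen_ne.inter ?_
    exact isOpen_lt (continuous_const.mul continuous_eNormR) hcontβ
  · refine ⟨hξ0, ?_⟩
    rw [hcS]; linarith
  · rintro w ⟨hw0, hw⟩ t ht
    refine ⟨smul_ne_zero ht.ne' hw0, ?_⟩
    rw [eNormR_smul w t ht]
    have : ∑ l, β l * (t • w) l = t * ∑ l, β l * w l := by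
      rw [Finset.mul_sum]
      exact Finset.sum_congr rfl fun l _ => by simp; ring
    rw [this]
    nlinarith
  -- continuity radius
  have hcont : Continuous fun p => fun l : Fin N => (grd (Z l) p 0).im :=
    continuous_pi fun l => Complex.continuous_im.comp
      ((continuous_apply 0).comp (continuous_grd (Z l) (hZ l)))
  obtain ⟨ρ, hρ, hρc⟩ := Metric.continuousAt_iff.1 (hcont.continuousAt (x := 0)) (c / (N + 1))
    (by positivity)
  -- Lipschitz constants
  choose K hK using fun i => ContDiff.lipschitzWith_of_hasCompactSupport (hZc i) (hZ i) one_ne_zero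
  set C : ℝ := ∑ i, (K i : ℝ) with hC
  have hCn : 0 ≤ C := Finset.sum_nonneg fun i _ => (K i).2
  have hKC : ∀ i, (K i : ℝ) ≤ C := fun i =>
    Finset.single_le_sum (f := fun i => (K i : ℝ)) (fun i _ => (K i).2) (Finset.mem_univ i)
  set r := min ρ R0 / 4 with hr
  have hrpos : 0 < r := by positivity
  have hrρ : 4 * r ≤ ρ := by rw [hr]; linarith [min_le_left ρ R0]
  have hrR : 4 * r ≤ R0 := by rw [hr]; linarith [min_le_right ρ R0]
  set T := min r (min (c / (2 * (N * C ^ 2 + 1))) (r / (4 * (C + 1)))) with hT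
  have hTpos : 0 < T := by positivity
  have hTr : T ≤ r := min_le_left _ _
  have hT1 : N * C ^ 2 * T ≤ c / 2 := by
    have : T ≤ c / (2 * (N * C ^ 2 + 1)) := (min_le_right _ _).trans (min_le_left _ _)
    rw [le_div_iff₀ (by positivity)] at this
    linarith
  have hT2 : C * T ≤ r / 4 := by
    have : T ≤ r / (4 * (C + 1)) := (min_le_right _ _).trans (min_le_right _ _)
    rw [le_div_iff₀ (by positivity)] at this
    linarith
  refine ⟨r, T, c / 2, hrpos, hrR, hTpos, hTr, by positivity, ?_⟩
  rintro x hx ξ ⟨hξ, hξΓ⟩ y hy t htT ht0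
  have hnξ := eNormR_pos ξ hξ
  have hat : |t| = -t := abs_of_nonpos ht0
  have hyR : ‖y‖ ≤ R0 := by linarith
  -- imaginary part, linear
  have him : ∑ l, (Z l (Fin.cons t y)).im * ξ l ≤ c * eNormR N ξ * t := by
    refine im_bound Z hZ y (fun l => by rw [hZ0 l y hyR]; simp) ξ T _ ?_ t htT ht0
    intro s hs hs0
    have hp : ‖(Fin.cons s y : Fin (N+1) → ℝ)‖ < ρ :=
      norm_cons_lt s y ρ hρ (by rw [abs_of_nonpos hs0]; linarith) (by linarith)
    have hd := hρc (x := Fin.cons s y) (by simpa using hp)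
    have hl : ∀ l, |(grd (Z l) (Fin.cons s y) 0).im - β l| ≤ c / (N + 1) := by
      intro l
      have := (dist_le_pi_dist _ _ l).trans hd.le
      rwa [Real.dist_eq] at this
    have hdiff : ∑ l, β l * ξ l - ∑ l, (grd (Z l) (Fin.cons s y) 0).im * ξ l ≤ c * eNormR N ξ := by
      rw [← Finset.sum_sub_distrib]
      have : ∀ l ∈ Finset.univ, β l * ξ l - (grd (Z l) (Fin.cons s y) 0).im * ξ l ≤
          c / (N + 1) * eNormR N ξ := by
        intro l _
        calc β l * ξ l - (grd (Z l) (Fin.cons s y) 0).im * ξ l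
            = -(((grd (Z l) (Fin.cons s y) 0).im - β l) * ξ l) := by ring
          _ ≤ |((grd (Z l) (Fin.cons s y) 0).im - β l) * ξ l| := neg_le_abs _
          _ = |(grd (Z l) (Fin.cons s y) 0).im - β l| * |ξ l| := abs_mul _ _
          _ ≤ _ := mul_le_mul (hl l) (abs_le_eNormR ξ l) (abs_nonneg _) (by positivity)
      refine (Finset.sum_le_card_nsmul _ _ _ this).trans ?_
      rw [nsmul_eq_mul, Finset.card_univ, Fintype.card_fin]
      have hN : (N : ℝ) * (c / (N + 1)) ≤ c := by
        rw [mul_div_assoc', div_le_iff₀ (by positivity)]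
        nlinarith
      calc (N:ℝ) * (c / (N + 1) * eNormR N ξ) = (N:ℝ) * (c / (N + 1)) * eNormR N ξ := by ring
        _ ≤ _ := by gcongr
    linarith
  have hlip : ∀ l, ‖Z l (Fin.cons t y) - (y l : ℂ)‖ ≤ C * |t| := by
    intro l
    rw [← hZ0 l y hyR, ← dist_eq_norm]
    refine ((hK l).dist_le_mul _ _).trans ?_
    refine mul_le_mul (hKC l) ?_ dist_nonneg hCn
    rw [dist_pi_le_iff (abs_nonneg t)]
    intro k
    refine Fin.cases ?_ (fun k => ?_) k
    · simp [Real.dist_eq]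
    · simp
  have himl : ∀ l, |(Z l (Fin.cons t y)).im| ≤ C * |t| := by
    intro l
    have := (Complex.abs_im_le_norm _).trans (hlip l)
    simpa using this
  have hrel : ∀ l, |(Z l (Fin.cons t y)).re - y l| ≤ C * |t| := by
    intro l
    have := (Complex.abs_re_le_norm _).trans (hlip l)
    simpa using this
  have hsq : ∑ l, (Z l (Fin.cons t y)).im ^ 2 ≤ N * (C * |t|) ^ 2 := by
    refine (Finset.sum_le_card_nsmul _ _ ((C * |t|) ^ 2) fun l _ => ?_).trans ?_
    · exact sq_le_sq' (by linarith [(abs_le.1 (himl l)).1]) (abs_le.1 (himl l)).2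
    · simp
  have hsq2 : ∑ l, (Z l (Fin.cons t y)).im ^ 2 ≤ c / 2 * (-t) := by
    refine hsq.trans ?_
    rw [hat]
    have h1 : N * C ^ 2 * (-t) ≤ c / 2 := by
      refine le_trans ?_ hT1
      have : 0 ≤ N * C ^ 2 := by positivity
      nlinarith
    nlinarith
  have hmain : (phs x ξ (fun i => Z i (Fin.cons t y))).re ≤ c / 2 * t * eNormR N ξ -
      eNormR N ξ * ∑ i, (x i - (Z i (Fin.cons t y)).re) ^ 2 := by
    rw [phs_re]
    have := mul_le_mul_of_nonneg_left hsq2 hnξ.le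
    linarith
  have hss : 0 ≤ ∑ i, (x i - (Z i (Fin.cons t y)).re) ^ 2 :=
    Finset.sum_nonneg fun i _ => sq_nonneg _
  refine ⟨by nlinarith, fun hry => ?_⟩
  obtain ⟨i, hi⟩ : ∃ i, r ≤ |y i| := by
    by_contra hcon
    push Not at hcon
    exact absurd ((pi_norm_lt_iff hrpos).2 hcon) (not_lt.2 hry)
  have hxi : |x i| < r / 4 := (norm_le_pi_norm x i).trans_lt hx
  have hCt : C * |t| ≤ r / 4 := by
    rw [hat]
    exact (mul_le_mul_of_nonneg_left (by linarith) hCn).trans hT2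
  have hge : r / 2 ≤ |x i - (Z i (Fin.cons t y)).re| := by
    have e : y i = -(x i - (y i)) + x i := by ring
    have h1 : |y i| ≤ |x i - (Z i (Fin.cons t y)).re| + |(Z i (Fin.cons t y)).re - y i| + |x i| := by
      calc |y i| = |-(x i - (Z i (Fin.cons t y)).re) + -((Z i (Fin.cons t y)).re - y i) + x i| := by
            congr 1; ring
        _ ≤ _ := by
            refine (abs_add_le _ _).trans (add_le_add_left ((abs_add_le _ _).trans ?_) _)
            rw [abs_neg, abs_neg]
    linarith [hrel i]
  have hge2 : r ^ 2 / 4 ≤ (x i - (Z i (Fin.cons t y)).re) ^ 2 := by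
    have h2 := pow_le_pow_left₀ (by positivity) hge 2
    rw [sq_abs] at h2
    refine le_trans (le_of_eq ?_) h2
    ring
  have hge3 : r ^ 2 / 4 ≤ ∑ i, (x i - (Z i (Fin.cons t y)).re) ^ 2 :=
    hge2.trans (Finset.single_le_sum (f := fun i => (x i - (Z i (Fin.cons t y)).re) ^ 2)
      (fun i _ => sq_nonneg _) (Finset.mem_univ i))
  have h5 := mul_le_mul_of_nonneg_left hge3 hnξ.le
  have h6 : c / 2 * t * eNormR N ξ ≤ 0 :=
    mul_nonpos_of_nonpos_of_nonneg (mul_nonpos_of_nonneg_of_nonpos (by positivity) ht0) hnξ.le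
  linarith


theorem exists_grd_bound {N : ℕ} (g : (Fin (N+1) → ℝ) → ℂ) (hg : ContDiff ℝ 1 g)
    (hc : HasCompactSupport g) : ∃ B, ∀ p k, ‖grd g p k‖ ≤ B := by
  obtain ⟨B, hB⟩ := (hc.fderiv ℝ).exists_bound_of_continuous (hg.continuous_fderiv one_ne_zero)
  refine ⟨B, fun p k => ?_⟩
  refine ((fderiv ℝ g p).le_opNorm _).trans ?_
  have : ‖(Pi.single k 1 : Fin (N+1) → ℝ)‖ = 1 := by rw [Pi.norm_single]; simp
  rw [this, mul_one]
  exact hB p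

theorem mem_Icc_norm {N : ℕ} (y : Fin N → ℝ) (s : ℝ) (hs : 0 ≤ s) :
    y ∈ Icc (fun _ => -s) (fun _ => s) ↔ ‖y‖ ≤ s := by
  rw [pi_norm_le_iff_of_nonneg hs]
  simp only [mem_Icc, Pi.le_def, Real.norm_eq_abs, abs_le]
  exact ⟨fun h i => ⟨h.1 i, h.2 i⟩, fun h => ⟨fun i => (h i).1, fun i => (h i).2⟩⟩

set_option maxHeartbeats 1000000 in
theorem core {N : ℕ} (M : ℕ → ℝ) (hM : ∀ k, 1 ≤ DCm M k)
    (Z : Fin N → (Fin (N+1) → ℝ) → ℂ) (hZ : ∀ i, ContDiff ℝ 1 (Z i))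
    (hZc : ∀ i, HasCompactSupport (Z i))
    (G : (Fin (N+1) → ℝ) → ℂ) (hG : ContDiff ℝ 1 G) (hGc : HasCompactSupport G)
    (a : Fin N → (Fin N → ℝ) → ℂ) (R0 Q : ℝ) (hR0 : 0 < R0) (hQ : 0 < Q)
    (hZ0 : ∀ l, ∀ y : Fin N → ℝ, ‖y‖ ≤ R0 → Z l (Fin.cons 0 y) = (y l : ℂ))
    (hLZ : ∀ l, ∀ y : Fin N → ℝ, ‖y‖ ≤ R0 → ∀ t, t ≠ 0 → |t| ≤ R0 → ∀ k : ℕ,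
      ‖grd (Z l) (Fin.cons t y) 0 + ∑ j, a j y * grd (Z l) (Fin.cons t y) (Fin.succ j)‖ ≤
        Q ^ (k + 1) * DCm M k * |t| ^ k)
    (hLG : ∀ y : Fin N → ℝ, ‖y‖ ≤ R0 → ∀ t, t ≠ 0 → |t| ≤ R0 → ∀ k : ℕ,
      ‖grd G (Fin.cons t y) 0 + ∑ j, a j y * grd G (Fin.cons t y) (Fin.succ j)‖ ≤
        Q ^ (k + 1) * DCm M k * |t| ^ k)
    (ξ0 : Fin N → ℝ) (hξ0 : ξ0 ≠ 0) (hchar : ∑ l, (a l 0).im * ξ0 l < 0) :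
    ∃ Γ : Set (Fin N → ℝ), IsOpen Γ ∧ ξ0 ∈ Γ ∧
      (∀ w ∈ Γ, ∀ t : ℝ, 0 < t → t • w ∈ Γ) ∧ (∀ w ∈ Γ, w ≠ 0) ∧
    ∃ r : ℝ, 0 < r ∧ 4 * r ≤ R0 ∧
    ∃ χ : (Fin N → ℝ) → ℝ, ContDiff ℝ (⊤ : ℕ∞) χ ∧ HasCompactSupport χ ∧
      tsupport χ ⊆ Metric.closedBall 0 (2 * r) ∧ (∀ x ∈ Metric.ball 0 r, χ x = 1) ∧
    ∃ A > (0 : ℝ), ∀ x : Fin N → ℝ, ‖x‖ < r / 4 → ∀ ξ ∈ Γ, ∀ k : ℕ,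
      ‖FBIT N (fun y => (χ y : ℂ) * G (Fin.cons 0 y)) x ξ‖ ≤
        A ^ (k + 1) * M k / (eNormR N ξ) ^ k := by
  have hMk : ∀ k, M k = DCm M k * k.factorial := fun k => by
    unfold DCm; field_simp
  have hMf : ∀ k, (k.factorial : ℝ) ≤ M k := fun k => by
    rw [hMk]
    have : (0:ℝ) < k.factorial := by positivity
    nlinarith [hM k]
  -- extension to t = 0
  have hLZ' : ∀ l, ∀ y : Fin N → ℝ, ‖y‖ ≤ R0 → ∀ k : ℕ, ∀ t, |t| ≤ R0 →
      ‖grd (Z l) (Fin.cons t y) 0 + ∑ j, a j y * grd (Z l) (Fin.cons t y) (Fin.succ j)‖ ≤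
        Q ^ (k + 1) * DCm M k * |t| ^ k := fun l y hy k =>
    L_ext (Z l) (hZ l) (fun j => a j y) y R0 hR0 (fun t => Q ^ (k + 1) * DCm M k * |t| ^ k)
      (by fun_prop) (fun t h1 h2 => hLZ l y hy t h1 h2 k)
  have hLG' : ∀ y : Fin N → ℝ, ‖y‖ ≤ R0 → ∀ k : ℕ, ∀ t, |t| ≤ R0 →
      ‖grd G (Fin.cons t y) 0 + ∑ j, a j y * grd G (Fin.cons t y) (Fin.succ j)‖ ≤
        Q ^ (k + 1) * DCm M k * |t| ^ k := fun y hy k =>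
    L_ext G hG (fun j => a j y) y R0 hR0 (fun t => Q ^ (k + 1) * DCm M k * |t| ^ k)
      (by fun_prop) (fun t h1 h2 => hLG y hy t h1 h2 k)
  have hsp : ∀ l, ∀ y : Fin N → ℝ, ‖y‖ < R0 → ∀ j : Fin N,
      grd (Z l) (Fin.cons 0 y) j.succ = if l = j then 1 else 0 := fun l y hy j =>
    grd_zero_space (Z l) (hZ l) l R0 (hZ0 l) y hy j
  have hcons0 : (Fin.cons 0 0 : Fin (N+1) → ℝ) = 0 := by
    ext k
    refine Fin.cases ?_ (fun k => ?_) k <;> simp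
  have hchar' : 0 < ∑ l, (grd (Z l) 0 0).im * ξ0 l := by
    have : ∀ l, grd (Z l) 0 0 = - a l 0 := by
      intro l
      have h := hLZ' l 0 (by simpa using hR0.le) 1 0 (by simpa using hR0.le)
      simp only [hsp l 0 (by simpa using hR0)] at h
      rw [hcons0] at h
      simp at h
      exact eq_neg_of_add_eq_zero_left h
    simp only [this, Complex.neg_im, neg_mul, Finset.sum_neg_distrib]
    linarith
  obtain ⟨Γ, hΓo, hΓ0, hΓc, hΓn, r, T, c, hr, hrR, hT, hTr, hc, hre⟩ :=
    geom Z hZ hZc R0 hR0 hZ0 ξ0 hξ0 hchar'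
  refine ⟨Γ, hΓo, hΓ0, hΓc, hΓn, r, hr, hrR, ?_⟩
  let χ : ContDiffBump (0 : Fin N → ℝ) := ⟨r, 2 * r, hr, by linarith⟩
  refine ⟨χ, χ.contDiff, χ.hasCompactSupport, ?_, ?_, ?_⟩
  · rw [χ.tsupport_eq]
  · intro x hx
    exact χ.one_of_mem_closedBall (Metric.ball_subset_closedBall hx)
  have hχ0 : ∀ y : Fin N → ℝ, 2 * r ≤ ‖y‖ → χ y = 0 := fun y hy =>
    χ.zero_of_le_dist (by simpa using hy)
  -- the amplitude
  set g : (Fin (N+1) → ℝ) → ℂ := fun p => ((χ (fun i => p (Fin.succ i)) : ℝ) : ℂ) * G p with hg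
  have hgC : ContDiff ℝ 1 g := by
    refine ContDiff.mul ?_ hG
    refine Complex.ofRealCLM.contDiff.comp ?_
    exact (χ.contDiff (n := 1)).comp (contDiff_pi.2 fun i => contDiff_apply ℝ ℝ (Fin.succ i))
  choose BZ hBZ using fun i => exists_grd_bound (Z i) (hZ i) (hZc i)
  obtain ⟨BG, hBG⟩ := exists_grd_bound G hG hGc
  set B : ℝ := |BG| + ∑ i, |BZ i| with hB
  have hBn : 0 ≤ B := by positivity
  have hGB : ∀ p k, ‖grd G p k‖ ≤ B := fun p k => by
    refine (hBG p k).trans ((le_abs_self _).trans ?_)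
    have : 0 ≤ ∑ i, |BZ i| := by positivity
    linarith
  have hZB : ∀ i p k, ‖grd (Z i) p k‖ ≤ B := fun i p k => by
    refine (hBZ i p k).trans ((le_abs_self _).trans ?_)
    have := Finset.single_le_sum (f := fun i => |BZ i|) (fun i _ => abs_nonneg _) (Finset.mem_univ i)
    linarith [abs_nonneg BG]
  set lo : Fin (N+1) → ℝ := Fin.cons (-T) (fun _ => -(2*r)) with hlo
  set hi : Fin (N+1) → ℝ := Fin.cons 0 (fun _ => 2*r) with hhi
  have hle : lo ≤ hi := by
    intro k
    refine Fin.cases ?_ (fun k => ?_) k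
    · simp [hlo, hhi, hT.le]
    · simp [hlo, hhi]; linarith
  have hgZc : Continuous fun p => fun i => grd (Z i) p :=
    continuous_pi fun i => continuous_grd _ (hZ i)
  obtain ⟨K1, hK1⟩ := (isCompact_Icc (a := lo) (b := hi)).exists_bound_of_continuousOn
    (f := fun p => (dmat (grd g p) (fun i => grd (Z i) p)).det)
    ((continuous_det_dmat.comp ((continuous_grd g hgC).prodMk hgZc)).continuousOn)
  set Y : Set (Fin N → ℝ) := Icc (fun _ => -(2*r)) (fun _ => 2*r) with hY
  obtain ⟨K2, hK2⟩ := (isCompact_Icc (a := fun _ : Fin N => -(2*r)) (b := fun _ => 2*r)).exists_bound_of_continuousOn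
    (f := fun y => g (Fin.cons (-T) y) * cof (fun i => grd (Z i) (Fin.cons (-T) y)) 0)
    (((hgC.continuous.mul ((continuous_cof 0).comp hgZc)).comp (continuous_cons_right (-T))).continuousOn)
  set K3 : ℝ := (N + 1) * (N.factorial * B ^ N) * Q with hK3
  have hK3n : 0 ≤ K3 := by positivity
  set K : ℝ := |K1| + |K2| + K3 with hK
  have hKn : 0 ≤ K := by positivity
  set A0 : ℝ := Q * (1 / c) + 1 / (r ^ 2 / 4) + 1 / (c * T) with hA0
  have hA1 : 0 ≤ Q * (1 / c) := by positivity
  have hA2 : 0 ≤ 1 / (r ^ 2 / 4) := by positivity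
  have hA3 : 0 ≤ 1 / (c * T) := by positivity
  have hA0n : 0 ≤ A0 := by positivity
  set vol : ℝ := (volume.real (Icc lo hi)) + volume.real Y with hvol
  have hv1 : 0 ≤ volume.real (Icc lo hi) := measureReal_nonneg
  have hv2 : 0 ≤ volume.real Y := measureReal_nonneg
  refine ⟨A0 + K * vol + 1, by positivity, ?_⟩
  intro x hx ξ hξ k
  have hnξ := eNormR_pos ξ (hΓn ξ hξ)
  set s := eNormR N ξ with hs
  set f : (Fin (N+1) → ℝ) → ℂ := fun p => Complex.exp (phs x ξ (fun i => Z i p)) * g p with hf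
  have hfC : ContDiff ℝ 1 f := contDiff_phs x ξ Z hZ g hgC
  have hf0 : ∀ p, ∀ i : Fin N, 2 * r ≤ |p i.succ| → f p = 0 := by
    intro p i hp
    have : χ (fun i => p (Fin.succ i)) = 0 := hχ0 _ (hp.trans (norm_le_pi_norm (fun i => p (Fin.succ i)) i))
    simp only [hf, hg, this]
    simp
  have stokes := div_C1 f hfC Z hZ hZc lo hi hle
    (fun p i hp => hf0 p i (by rw [hp]; simp [hlo]; exact le_abs_self _))
    (fun p i hp => hf0 p i (by rw [hp]; simp [hhi]; exact le_abs_self _))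
  -- identify the FBI transform
  have hfbi : FBIT N (fun y => (χ y : ℂ) * G (Fin.cons 0 y)) x ξ =
      ∫ y in Y, f (Fin.cons 0 y) * cof (fun i => grd (Z i) (Fin.cons 0 y)) 0 := by
    unfold FBIT
    rw [← setIntegral_eq_integral_of_forall_compl_eq_zero (s := Y)]
    · refine setIntegral_congr_fun measurableSet_Icc fun y hy => ?_
      have hy' : ‖y‖ ≤ 2 * r := (mem_Icc_norm y _ (by positivity)).1 hy
      have hcof : cof (fun i => grd (Z i) (Fin.cons 0 y)) 0 = 1 := by
        rw [cof_zero]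
        simp only [hsp _ y (by linarith : ‖y‖ < R0)]
        have : (Matrix.of fun i k : Fin N => if i = k then (1:ℂ) else 0) = 1 := by
          ext i k
          simp [Matrix.one_apply]
        rw [this, Matrix.det_one]
      simp only [hcof, mul_one, hf, hg, Fin.cons_succ, hZ0 _ y (by linarith : ‖y‖ ≤ R0)]
      congr 2
      unfold phs
      rw [eNormR_sq]
      push_cast
      simp
    · intro y hy
      have hy' : ¬ ‖y‖ ≤ 2 * r := fun h => hy ((mem_Icc_norm y _ (by positivity)).2 h)
      simp [hχ0 y (by linarith)]
  have e1 : (fun i : Fin N => lo (Fin.succ i)) = fun _ => -(2*r) := by simp [hlo]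
  have e2 : (fun i : Fin N => hi (Fin.succ i)) = fun _ => 2*r := by simp [hhi]
  have e3 : lo 0 = -T := by simp [hlo]
  have e4 : hi 0 = 0 := by simp [hhi]
  rw [e1, e2, e3, e4] at stokes
  set X : ℝ := M k / s ^ k with hX
  have hXn : 0 ≤ X := div_nonneg ((Nat.cast_nonneg _).trans (hMf k)) (by positivity)
  have hfX : (k.factorial : ℝ) / s ^ k ≤ X := by rw [hX]; gcongr; exact hMf k
  -- bounds for the exponential
  have hexp : ∀ u : ℝ, 0 < u → 1 / u ≤ A0 → Real.exp (-(u * s)) ≤ A0 ^ k * X := by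
    intro u hu huA
    refine (exp_decay' u s hu hnξ k).trans ?_
    calc k.factorial * (1 / u) ^ k / s ^ k = (1 / u) ^ k * (k.factorial / s ^ k) := by ring
      _ ≤ A0 ^ k * X := by gcongr
  have hbox : ∀ p ∈ Icc lo hi, ‖(dmat (grd f p) (fun i => grd (Z i) p)).det‖ ≤ K * (A0 ^ k * X) := by
    intro p hp
    obtain ⟨t, y, rfl⟩ : ∃ t y, p = Fin.cons t y := ⟨p 0, Fin.tail p, (Fin.cons_self_tail p).symm⟩
    have ht1 : -T ≤ t := by simpa [hlo] using hp.1 0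
    have ht2 : t ≤ 0 := by simpa [hhi] using hp.2 0
    have hy : ‖y‖ ≤ 2 * r := (mem_Icc_norm y _ (by positivity)).1
      ⟨fun i => by simpa [hlo] using hp.1 i.succ, fun i => by simpa [hhi] using hp.2 i.succ⟩
    have hrow : (dmat (grd f (Fin.cons t y)) (fun i => grd (Z i) (Fin.cons t y))).det = _ :=
      grd_exp x ξ Z hZ g hgC (Fin.cons t y)
    rw [hrow, norm_mul, Complex.norm_exp]
    obtain ⟨hr1, hr2⟩ := hre x hx ξ hξ y hy t ht1 ht2
    have hpos : 0 ≤ A0 ^ k * X := by positivity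
    by_cases hyr : r ≤ ‖y‖
    · have h1 : Real.exp (phs x ξ fun i => Z i (Fin.cons t y)).re ≤ A0 ^ k * X :=
        (Real.exp_le_exp.2 (hr2 hyr)).trans (hexp _ (by positivity) (by rw [hA0]; linarith))
      have h2 : ‖(dmat (grd g (Fin.cons t y)) fun i => grd (Z i) (Fin.cons t y)).det‖ ≤ K :=
        (hK1 _ hp).trans ((le_abs_self _).trans (by rw [hK]; linarith [abs_nonneg K2]))
      calc _ ≤ (A0 ^ k * X) * K := mul_le_mul h1 h2 (norm_nonneg _) hpos
        _ = _ := mul_comm _ _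
    · push Not at hyr
      have hgG : grd g (Fin.cons t y) = grd G (Fin.cons t y) := by
        have hev : g =ᶠ[nhds (Fin.cons t y)] G := by
          have hco : Continuous fun p : Fin (N+1) → ℝ => ‖fun i : Fin N => p (Fin.succ i)‖ := by
            fun_prop
          have : ∀ᶠ p in nhds (Fin.cons t y : Fin (N+1) → ℝ), ‖fun i : Fin N => p (Fin.succ i)‖ < r :=
            hco.continuousAt.tendsto.eventually (gt_mem_nhds (by simpa using hyr))
          filter_upwards [this] with p hp
          have : χ (fun i => p (Fin.succ i)) = 1 :=
            χ.one_of_mem_closedBall (by simpa using hp.le)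
          simp [hg, this]
        unfold grd
        rw [hev.fderiv_eq]
      rw [hgG]
      have hat : |t| ≤ R0 := by rw [abs_of_nonpos ht2]; linarith
      have hyR : ‖y‖ ≤ R0 := by linarith
      have hdet := det_dmat_bound (grd G (Fin.cons t y)) (fun i => grd (Z i) (Fin.cons t y))
        (fun j => a j y) B (Q ^ (k + 1) * DCm M k * |t| ^ k) (hGB _) (fun i => hZB i _)
        (hLG' y hyR k t hat) (fun i => hLZ' i y hyR k t hat)
      have hE : Real.exp (phs x ξ fun i => Z i (Fin.cons t y)).re ≤ Real.exp (-(c * |t| * s)) := by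
        refine Real.exp_le_exp.2 (hr1.trans (le_of_eq ?_))
        rw [abs_of_nonpos ht2]; ring
      have hD := exp_decay c s |t| hc hnξ (abs_nonneg t) k
      have hMn : 0 ≤ DCm M k := zero_le_one.trans (hM k)
      calc _ ≤ Real.exp (-(c * |t| * s)) *
            ((N + 1) * (N.factorial * B ^ N) * (Q ^ (k + 1) * DCm M k * |t| ^ k)) :=
            mul_le_mul hE hdet (norm_nonneg _) (Real.exp_pos _).le
        _ = K3 * Q ^ k * DCm M k * (|t| ^ k * Real.exp (-(c * |t| * s))) := by
            rw [hK3]; ring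
        _ ≤ K3 * Q ^ k * DCm M k * (k.factorial * (1 / c) ^ k / s ^ k) := by gcongr
        _ = K3 * ((Q * (1 / c)) ^ k * X) := by rw [hX, hMk, mul_pow]; ring
        _ ≤ K * (A0 ^ k * X) := by
            gcongr
            · rw [hK]; linarith [abs_nonneg K1, abs_nonneg K2]
            · rw [hA0]; linarith
  have hface : ∀ y ∈ Y, ‖f (Fin.cons (-T) y) * cof (fun i => grd (Z i) (Fin.cons (-T) y)) 0‖ ≤
      K * (A0 ^ k * X) := by
    intro y hy
    have hy' : ‖y‖ ≤ 2 * r := (mem_Icc_norm y _ (by positivity)).1 hy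
    obtain ⟨hr1, -⟩ := hre x hx ξ hξ y hy' (-T) le_rfl (by linarith)
    have hpos : 0 ≤ A0 ^ k * X := by positivity
    simp only [hf]
    rw [mul_assoc, norm_mul, Complex.norm_exp]
    have h1 : Real.exp (phs x ξ fun i => Z i (Fin.cons (-T) y)).re ≤ A0 ^ k * X := by
      refine (Real.exp_le_exp.2 (hr1.trans (le_of_eq ?_))).trans
        (hexp (c * T) (by positivity) (by rw [hA0]; linarith))
      ring
    have h2 : ‖g (Fin.cons (-T) y) * cof (fun i => grd (Z i) (Fin.cons (-T) y)) 0‖ ≤ K :=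
      (hK2 _ hy).trans ((le_abs_self _).trans (by rw [hK]; linarith [abs_nonneg K1]))
    calc _ ≤ (A0 ^ k * X) * K := mul_le_mul h1 h2 (norm_nonneg _) hpos
      _ = _ := mul_comm _ _
  have b1 := norm_setIntegral_le_of_norm_le_const (isCompact_Icc.measure_lt_top (μ := volume)) hbox
  have b2 := norm_setIntegral_le_of_norm_le_const (isCompact_Icc.measure_lt_top (μ := volume)) hface
  have hsplit : FBIT N (fun y => (χ y : ℂ) * G (Fin.cons 0 y)) x ξ =
      (∫ p in Icc lo hi, (dmat (grd f p) (fun i => grd (Z i) p)).det) +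
      ∫ y in Y, f (Fin.cons (-T) y) * cof (fun i => grd (Z i) (Fin.cons (-T) y)) 0 := by
    rw [hfbi, stokes]; ring
  rw [hsplit]
  calc _ ≤ K * (A0 ^ k * X) * volume.real (Icc lo hi) + K * (A0 ^ k * X) * volume.real Y :=
        (norm_add_le _ _).trans (add_le_add b1 b2)
    _ = (K * vol) * (A0 ^ k * X) := by rw [hvol]; ring
    _ ≤ (A0 + K * vol + 1) * ((A0 + K * vol + 1) ^ k * X) := by
        have hKv : 0 ≤ K * vol := by positivity
        gcongr
        · linarith
        · linarith
    _ = _ := by rw [hX]; ring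


noncomputable def phiMap {N n : ℕ} (j0 : Fin n) :
    (Fin (N+1) → ℝ) →L[ℝ] (Fin N → ℝ) × (Fin n → ℝ) :=
  (ContinuousLinearMap.pi fun i : Fin N => ContinuousLinearMap.proj (R := ℝ) (φ := fun _ : Fin (N+1) => ℝ) i.succ).prod
    ((ContinuousLinearMap.single ℝ (fun _ : Fin n => ℝ) j0).comp
      (ContinuousLinearMap.proj (R := ℝ) (φ := fun _ : Fin (N+1) => ℝ) 0))

theorem phiMap_fst {N n : ℕ} (j0 : Fin n) (p : Fin (N+1) → ℝ) :
    (phiMap j0 p).1 = fun i => p i.succ := rfl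

theorem phiMap_snd {N n : ℕ} (j0 : Fin n) (p : Fin (N+1) → ℝ) :
    (phiMap j0 p).2 = Pi.single j0 (p 0) := rfl

theorem phiMap_cons {N n : ℕ} (j0 : Fin n) (t : ℝ) (y : Fin N → ℝ) :
    phiMap j0 (Fin.cons t y) = (y, Pi.single j0 t) := by
  refine Prod.ext ?_ ?_
  · rw [phiMap_fst]; funext i; simp
  · rw [phiMap_snd]; simp

theorem phiMap_single_zero {N n : ℕ} (j0 : Fin n) :
    phiMap j0 (Pi.single (0 : Fin (N+1)) (1:ℝ)) = (0, Pi.single j0 1) := by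
  refine Prod.ext ?_ ?_
  · rw [phiMap_fst]; funext i; simp
  · rw [phiMap_snd]; simp

theorem phiMap_single_succ {N n : ℕ} (j0 : Fin n) (j : Fin N) :
    phiMap j0 (Pi.single j.succ (1:ℝ)) = (Pi.single j 1, (0 : Fin n → ℝ)) := by
  refine Prod.ext ?_ ?_
  · rw [phiMap_fst]; funext i; simp [Pi.single_apply]
  · rw [phiMap_snd]; simp [Pi.single_apply]

noncomputable def cutF {N n : ℕ} (j0 : Fin n) (θ : ContDiffBump (0 : Fin (N+1) → ℝ))
    (H : (Fin N → ℝ) → (Fin n → ℝ) → ℂ) (p : Fin (N+1) → ℝ) : ℂ :=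
  (θ p : ℂ) * H (phiMap j0 p).1 (phiMap j0 p).2

theorem cutF_compact {N n : ℕ} (j0 : Fin n) (θ : ContDiffBump (0 : Fin (N+1) → ℝ))
    (H : (Fin N → ℝ) → (Fin n → ℝ) → ℂ) : HasCompactSupport (cutF j0 θ H) := by
  refine HasCompactSupport.mul_right ?_
  exact θ.hasCompactSupport.comp_left (g := fun x : ℝ => (x : ℂ)) (by simp)

theorem norm_tail_le {N : ℕ} (p : Fin (N+1) → ℝ) : ‖fun i : Fin N => p i.succ‖ ≤ ‖p‖ := by
  rw [pi_norm_le_iff_of_nonneg (norm_nonneg _)]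
  intro i
  exact norm_le_pi_norm p i.succ

theorem cutF_contDiff {N n : ℕ} (j0 : Fin n) (θ : ContDiffBump (0 : Fin (N+1) → ℝ))
    (Ω : Set (Fin N → ℝ)) (hΩ : IsOpen Ω) (hb : Metric.closedBall 0 θ.rOut ⊆ Ω)
    (H : (Fin N → ℝ) → (Fin n → ℝ) → ℂ)
    (hH : ContDiffOn ℝ 1 (fun p : (Fin N → ℝ) × (Fin n → ℝ) => H p.1 p.2) (Ω ×ˢ Set.univ)) :
    ContDiff ℝ 1 (cutF j0 θ H) := by
  have hθ : ContDiff ℝ 1 (fun p => ((θ p : ℝ) : ℂ)) :=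
    Complex.ofRealCLM.contDiff.comp θ.contDiff
  rw [contDiff_iff_contDiffAt]
  intro p
  by_cases hp : p ∈ tsupport θ
  · rw [θ.tsupport_eq, mem_closedBall_zero_iff] at hp
    have hm : phiMap j0 p ∈ Ω ×ˢ (Set.univ : Set (Fin n → ℝ)) := by
      refine ⟨hb ?_, mem_univ _⟩
      rw [mem_closedBall_zero_iff]
      exact (norm_tail_le p).trans hp
    have h1 := hH.contDiffAt ((hΩ.prod isOpen_univ).mem_nhds hm)
    exact hθ.contDiffAt.mul (h1.comp p (phiMap j0).contDiff.contDiffAt)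
  · have h0 : cutF j0 θ H =ᶠ[nhds p] fun _ => 0 := by
      filter_upwards [(isClosed_tsupport θ).isOpen_compl.mem_nhds hp] with q hq
      have : θ q = 0 := image_eq_zero_of_notMem_tsupport hq
      simp [cutF, this]
    exact contDiffAt_const.congr_of_eventuallyEq h0

theorem cutF_cons {N n : ℕ} (j0 : Fin n) (θ : ContDiffBump (0 : Fin (N+1) → ℝ))
    (H : (Fin N → ℝ) → (Fin n → ℝ) → ℂ) (t : ℝ) (y : Fin N → ℝ)
    (ht : |t| < θ.rIn) (hy : ‖y‖ < θ.rIn) :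
    cutF j0 θ H (Fin.cons t y) = H y (Pi.single j0 t) := by
  have : θ (Fin.cons t y) = 1 := θ.one_of_mem_closedBall (by
    rw [mem_closedBall_zero_iff]; exact (norm_cons_lt t y _ θ.rIn_pos ht hy).le)
  simp [cutF, this, phiMap_cons]

theorem cutF_L {N n : ℕ} (j0 : Fin n) (θ : ContDiffBump (0 : Fin (N+1) → ℝ))
    (Ω : Set (Fin N → ℝ)) (hΩ : IsOpen Ω)
    (a : Fin n → Fin N → (Fin N → ℝ) → ℂ)
    (H : (Fin N → ℝ) → (Fin n → ℝ) → ℂ)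
    (hH : ContDiffOn ℝ 1 (fun p : (Fin N → ℝ) × (Fin n → ℝ) => H p.1 p.2) (Ω ×ˢ Set.univ))
    (t : ℝ) (y : Fin N → ℝ) (hyΩ : y ∈ Ω)
    (ht : |t| < θ.rIn) (hy : ‖y‖ < θ.rIn) :
    grd (cutF j0 θ H) (Fin.cons t y) 0 +
      ∑ j, a j0 j y * grd (cutF j0 θ H) (Fin.cons t y) (Fin.succ j) =
    Lop a j0 H y (Pi.single j0 t) := by
  set F := (fun p : (Fin N → ℝ) × (Fin n → ℝ) => H p.1 p.2) with hF
  have hm : ((y, Pi.single j0 t) : (Fin N → ℝ) × (Fin n → ℝ)) ∈ Ω ×ˢ (Set.univ : Set (Fin n → ℝ)) :=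
    ⟨hyΩ, mem_univ _⟩
  have hD : HasFDerivAt F (fderiv ℝ F (y, Pi.single j0 t)) (y, Pi.single j0 t) :=
    ((hH.contDiffAt ((hΩ.prod isOpen_univ).mem_nhds hm)).differentiableAt one_ne_zero).hasFDerivAt
  set D := fderiv ℝ F (y, Pi.single j0 t)
  have hev : cutF j0 θ H =ᶠ[nhds (Fin.cons t y)] fun p => F (phiMap j0 p) := by
    have hb : Metric.ball (0 : Fin (N+1) → ℝ) θ.rIn ∈ nhds (Fin.cons t y : Fin (N+1) → ℝ) :=
      Metric.isOpen_ball.mem_nhds (by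
        rw [mem_ball_zero_iff]; exact norm_cons_lt t y _ θ.rIn_pos ht hy)
    filter_upwards [hb] with q hq
    have : θ q = 1 := θ.one_of_mem_closedBall (Metric.ball_subset_closedBall hq)
    simp [cutF, this, hF]
  have hc : HasFDerivAt (cutF j0 θ H) (D.comp (phiMap j0)) (Fin.cons t y) := by
    refine HasFDerivAt.congr_of_eventuallyEq ?_ hev
    refine HasFDerivAt.comp (Fin.cons t y : Fin (N+1) → ℝ) (g := F) ?_ (phiMap j0).hasFDerivAt
    rw [phiMap_cons]; exact hD
  have hr : HasFDerivAt (fun r' => H y r')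
      (D.comp (ContinuousLinearMap.inr ℝ (Fin N → ℝ) (Fin n → ℝ))) (Pi.single j0 t) :=
    HasFDerivAt.comp (g := F) (f := fun r' : Fin n → ℝ => (y, r')) (Pi.single j0 t : Fin n → ℝ) hD
      (hasFDerivAt_prodMk_right y (Pi.single j0 t : Fin n → ℝ))
  have hx : HasFDerivAt (fun x' => H x' (Pi.single j0 t))
      (D.comp (ContinuousLinearMap.inl ℝ (Fin N → ℝ) (Fin n → ℝ))) y :=
    HasFDerivAt.comp (g := F) (f := fun x' : Fin N → ℝ => (x', (Pi.single j0 t : Fin n → ℝ))) y hD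
      (hasFDerivAt_prodMk_left y (Pi.single j0 t : Fin n → ℝ))
  unfold Lop grd
  rw [hc.fderiv, hr.fderiv, hx.fderiv]
  simp only [ContinuousLinearMap.comp_apply, phiMap_single_zero, phiMap_single_succ,
    ContinuousLinearMap.inr_apply, ContinuousLinearMap.inl_apply]

theorem eNormR_single {n : ℕ} (j0 : Fin n) (t : ℝ) : eNormR n (Pi.single j0 t) = |t| := by
  unfold eNormR
  rw [Finset.sum_eq_single j0]
  · simp [Real.sqrt_sq_eq_abs]
  · intro b _ hb; simp [hb]
  · simp

end Helpers

/-- Lemma 3.4 of the paper: approximate solutions `Z_ℓ` of the system `L_j` together with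
an approximately `L_{j_0}`-flat function `Ψ` yield Denjoy–Carleman decay of the F.B.I.
transform of `Ψ(·,0)` in the direction `ξ_0` whenever `Im a_{j_0}(0)·ξ_0 < 0`. -/
theorem stmt17 (N n : ℕ) (M : ℕ → ℝ) (hreg : DCRegular M)
    (Ω : Set (Fin N → ℝ)) (hΩ : IsOpen Ω) (hΩ0 : (0 : Fin N → ℝ) ∈ Ω)
    (a : Fin n → Fin N → (Fin N → ℝ) → ℂ)
    (ha : ∀ j l, ContDiffOn ℝ 1 (a j l) Ω)
    (Q δ : ℝ) (hQ : 0 < Q) (hδ : 0 < δ)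
    (Zf : Fin N → (Fin N → ℝ) → (Fin n → ℝ) → ℂ)
    (hZC1 : ∀ l, ContDiffOn ℝ 1
      (fun p : (Fin N → ℝ) × (Fin n → ℝ) => Zf l p.1 p.2) (Ω ×ˢ Set.univ))
    (hZ0 : ∀ l, ∀ x ∈ Ω, Zf l x 0 = (x l : ℂ))
    (hZest : ∀ (l : Fin N) (j : Fin n) (x : Fin N → ℝ) (r : Fin n → ℝ), x ∈ Ω →
      0 < eNormR n r → eNormR n r < δ → ∀ k : ℕ,
        ‖Lop a j (Zf l) x r‖ ≤ Q ^ (k + 1) * DCm M k * (eNormR n r) ^ k)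
    (ξ0 : Fin N → ℝ) (hξ0 : ξ0 ≠ 0) (j0 : Fin n)
    (hchar : ∑ l, (a j0 l 0).im * ξ0 l < 0)
    (Ψ : (Fin N → ℝ) → (Fin n → ℝ) → ℂ)
    (hΨC1 : ContDiffOn ℝ 1
      (fun p : (Fin N → ℝ) × (Fin n → ℝ) => Ψ p.1 p.2) (Ω ×ˢ Set.univ))
    (hΨest : ∀ (x : Fin N → ℝ) (r : Fin n → ℝ), x ∈ Ω →
      0 < eNormR n r → eNormR n r < δ → ∀ k : ℕ,
        ‖Lop a j0 Ψ x r‖ ≤ Q ^ (k + 1) * DCm M k * (eNormR n r) ^ k) :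
    ∃ Γ : Set (Fin N → ℝ), IsOpen Γ ∧ ξ0 ∈ Γ ∧
      (∀ w ∈ Γ, ∀ t : ℝ, 0 < t → t • w ∈ Γ) ∧ (∀ w ∈ Γ, w ≠ 0) ∧
    ∃ V UU : Set (Fin N → ℝ), IsOpen V ∧ IsOpen UU ∧
      (0 : Fin N → ℝ) ∈ V ∧ closure V ⊆ UU ∧ IsCompact (closure V) ∧
      closure UU ⊆ Ω ∧ IsCompact (closure UU) ∧
    ∃ χ : (Fin N → ℝ) → ℝ, ContDiff ℝ (⊤ : ℕ∞) χ ∧ HasCompactSupport χ ∧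
      tsupport χ ⊆ Ω ∧ (∀ x ∈ UU, χ x = 1) ∧
    ∃ A > (0 : ℝ), ∀ x ∈ V, ∀ ξ ∈ Γ, ∀ k : ℕ,
      ‖FBIT N (fun y => (χ y : ℂ) * Ψ y 0) x ξ‖ ≤ A ^ (k + 1) * M k / (eNormR N ξ) ^ k := by
  obtain ⟨ε, hε, hεΩ⟩ := Metric.nhds_basis_closedBall.mem_iff.1 (hΩ.mem_nhds hΩ0)
  let θ : ContDiffBump (0 : Fin (N+1) → ℝ) := ⟨ε / 2, ε, by linarith, by linarith⟩
  have hin : θ.rIn = ε / 2 := rfl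
  have hout : θ.rOut = ε := rfl
  have hR0 : 0 < min (ε / 4) (δ / 2) := lt_min (by linarith) (by linarith)
  have hRε : min (ε / 4) (δ / 2) ≤ ε / 4 := min_le_left _ _
  have hRδ : min (ε / 4) (δ / 2) ≤ δ / 2 := min_le_right _ _
  generalize min (ε / 4) (δ / 2) = R0 at hR0 hRε hRδ
  have hyΩ : ∀ y : Fin N → ℝ, ‖y‖ ≤ R0 → y ∈ Ω := fun y hy =>
    hεΩ (by rw [mem_closedBall_zero_iff]; linarith)
  have hlt : ∀ s : ℝ, s ≤ R0 → s < θ.rIn := fun s hs => by rw [hin]; linarith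
  have key : ∀ H : (Fin N → ℝ) → (Fin n → ℝ) → ℂ,
      ContDiffOn ℝ 1 (fun p : (Fin N → ℝ) × (Fin n → ℝ) => H p.1 p.2) (Ω ×ˢ Set.univ) →
      (∀ (x : Fin N → ℝ) (r : Fin n → ℝ), x ∈ Ω →
      0 < eNormR n r → eNormR n r < δ → ∀ k : ℕ,
        ‖Lop a j0 H x r‖ ≤ Q ^ (k + 1) * DCm M k * (eNormR n r) ^ k) →
      ∀ y : Fin N → ℝ, ‖y‖ ≤ R0 → ∀ t, t ≠ 0 → |t| ≤ R0 → ∀ k : ℕ,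
      ‖grd (cutF j0 θ H) (Fin.cons t y) 0 +
        ∑ j, a j0 j y * grd (cutF j0 θ H) (Fin.cons t y) (Fin.succ j)‖ ≤
        Q ^ (k + 1) * DCm M k * |t| ^ k := by
    intro H hH hest y hy t ht0 ht k
    rw [cutF_L j0 θ Ω hΩ a H hH t y (hyΩ y hy) (hlt _ ht) (hlt _ hy)]
    have := hest y (Pi.single j0 t) (hyΩ y hy)
    rw [eNormR_single] at this
    exact this (abs_pos.2 ht0) (by linarith) k
  obtain ⟨Γ, hΓo, hΓ0, hΓc, hΓn, r, hr, hrR, χ, hχs, hχc, hχt, hχ1, A, hA, hfin⟩ :=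
    core M (DCm_ge_one M hreg) (fun l => cutF j0 θ (Zf l))
      (fun l => cutF_contDiff j0 θ Ω hΩ (by rw [hout]; exact hεΩ) (Zf l) (hZC1 l))
      (fun l => cutF_compact j0 θ (Zf l)) (cutF j0 θ Ψ)
      (cutF_contDiff j0 θ Ω hΩ (by rw [hout]; exact hεΩ) Ψ hΨC1)
      (cutF_compact j0 θ Ψ) (a j0) R0 Q hR0 hQ
      (fun l y hy => by
        rw [cutF_cons j0 θ (Zf l) 0 y (hlt _ (by simpa using hR0.le)) (hlt _ hy), Pi.single_zero]
        exact hZ0 l y (hyΩ y hy))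
      (fun l => key (Zf l) (hZC1 l) (fun x r => hZest l j0 x r))
      (key Ψ hΨC1 hΨest) ξ0 hξ0 hchar
  refine ⟨Γ, hΓo, hΓ0, hΓc, hΓn, Metric.ball 0 (r / 4), Metric.ball 0 r, Metric.isOpen_ball,
    Metric.isOpen_ball, Metric.mem_ball_self (by linarith), ?_, ?_, ?_, ?_, χ, hχs, hχc, ?_, hχ1,
    A, hA, ?_⟩
  · exact Metric.closure_ball_subset_closedBall.trans
      (Metric.closedBall_subset_ball (by linarith))
  · exact Metric.isBounded_ball.isCompact_closure
  · refine Metric.closure_ball_subset_closedBall.trans fun y hy => hyΩ y ?_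
    rw [mem_closedBall_zero_iff] at hy
    linarith
  · exact Metric.isBounded_ball.isCompact_closure
  · refine hχt.trans fun y hy => hyΩ y ?_
    rw [mem_closedBall_zero_iff] at hy
    linarith
  · intro x hx ξ hξ k
    rw [mem_ball_zero_iff] at hx
    have hfun : (fun y => (χ y : ℂ) * Ψ y 0) =
        fun y => (χ y : ℂ) * cutF j0 θ Ψ (Fin.cons 0 y) := by
      funext y
      by_cases hy : y ∈ tsupport χ
      · have hy2 := hχt hy
        rw [mem_closedBall_zero_iff] at hy2
        rw [cutF_cons j0 θ Ψ 0 y (hlt _ (by simpa using hR0.le)) (hlt _ (by linarith)),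
          Pi.single_zero]
      · rw [image_eq_zero_of_notMem_tsupport hy]; simp
    rw [hfun]
    exact hfin x hx ξ hξ k
end
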